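/- Under Conditions (A)–(D) with b_j ≠ 0 for all j ≥ 1, let Q(V) = lim_{k→∞} k⁻¹ log 𝔼_u exp(Σ_{n=1}^k V(u_n)) (which exists and is independent of u ∈ 𝒜), and let I : 𝒫(𝒜) → [0,+∞] be its Legendre transform, I(σ) = sup_{W ∈ C(𝒜)} (⟨W,σ⟩ − Q(W)). Then for every V ∈ 𝒱 there exists a unique measure σ_V ∈ 𝒫(𝒜) such that Q(V) = ⟨V, σ_V⟩ − I(σ_V); moreover σ_V = h_V μ_V, where (λ_V, h_V, μ_V) ∈ ℝ₊ × C₊(𝒜) × 𝒫(𝒜) is the eigen-triple of the semigroup 𝔓_k^V, i.e. 𝔓₁^V h_V = λ_V h_V, 𝔓₁^{V*} μ_V = λ_V μ_V, ⟨h_V, μ_V⟩ = 1. -/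

import Mathlib

open MeasureTheory ProbabilityTheory Filter Topology BoundedContinuousFunction
open scoped ENNReal NNReal Pointwise

noncomputable section

/-- The sets `𝒜_k(B)`: `𝒜_0(B) = B`, `𝒜_k(B) = S(𝒜_{k-1}(B)) + 𝒦`. -/
def attain {H : Type*} [AddCommGroup H] (S : H → H) (K : Set H) (B : Set H) : ℕ → Set H
  | 0 => B
  | n + 1 => S '' attain S K B n + K

/-- The domain of attainability `𝒜(B)` from `B`: the closure of `⋃_k 𝒜_k(B)`. -/
def attainDom {H : Type*} [AddCommGroup H] [TopologicalSpace H]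
    (S : H → H) (K : Set H) (B : Set H) : Set H :=
  closure (⋃ n, attain S K B n)

variable {H : Type} [NormedAddCommGroup H] [InnerProductSpace ℝ H] [CompleteSpace H]

/-- The orthogonal projection `𝖯_N` onto the span of the first `N` vectors of an orthonormal
basis. -/
def projB (e : HilbertBasis ℕ ℝ H) (N : ℕ) (u : H) : H :=
  ∑ j ∈ Finset.range N, e.repr u j • (e j : H)

/-- Condition (A): regularity and stability. -/
def CondA (S : H → H) : Prop :=
  ContDiff ℝ 1 S ∧
  ∀ R r : ℝ, 0 < r → r < R →
    ∃ C : ℝ, 0 < C ∧ ∃ a : ℝ, 0 < a ∧ a < 1 ∧ ∃ n₀ : ℕ, 1 ≤ n₀ ∧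
      (∀ u₁ ∈ Metric.closedBall (0 : H) R, ∀ u₂ ∈ Metric.closedBall (0 : H) R,
          ‖S u₁ - S u₂‖ ≤ C * ‖u₁ - u₂‖) ∧
      ∀ u ∈ Metric.closedBall (0 : H) R, ∀ n : ℕ, n₀ ≤ n →
          ‖S^[n] u‖ ≤ max (a * ‖u‖) r

/-- Condition (B): dissipativity. -/
def CondB (S : H → H) (K : Set H) : Prop :=
  ∃ ρ : ℝ, 0 < ρ ∧ ∃ k₀ : ℝ → ℕ, Monotone k₀ ∧
    ∀ R : ℝ, 0 ≤ R → ∀ k : ℕ, k₀ R ≤ k →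
      attain S K (Metric.closedBall 0 R) k ⊆ Metric.closedBall (0 : H) ρ

/-- Condition (C): squeezing. -/
def CondC (S : H → H) (e : HilbertBasis ℕ ℝ H) : Prop :=
  ∀ R : ℝ, 0 < R → ∃ γ : ℕ → ℝ, (∀ N, 0 < γ N) ∧ Antitone γ ∧
    Tendsto γ atTop (𝓝 0) ∧
    ∀ N : ℕ, ∀ u₁ ∈ Metric.closedBall (0 : H) R, ∀ u₂ ∈ Metric.closedBall (0 : H) R,
      ‖(S u₁ - S u₂) - projB e N (S u₁ - S u₂)‖ ≤ γ N * ‖u₁ - u₂‖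

/-- Condition (D): structure of the noise, `η_k = ∑_j b_j ξ_{jk} e_j` with `∑ b_j² < ∞`,
independent scalar `ξ_{jk}` whose laws have Lipschitz densities `p_j` with `p_j(0) > 0` and
support in `[-1,1]`. -/
def CondD [MeasurableSpace H] {Ω : Type*} [MeasurableSpace Ω] (P : Measure Ω)
    (e : HilbertBasis ℕ ℝ H) (η : ℕ → Ω → H)
    (b : ℕ → ℝ) (ξ : ℕ → ℕ → Ω → ℝ) (p : ℕ → ℝ → ℝ) : Prop :=
  (∀ j, 0 ≤ b j) ∧ Summable (fun j => (b j) ^ 2) ∧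
  (∀ k ω, HasSum (fun j => (b j * ξ j k ω) • (e j : H)) (η k ω)) ∧
  (∀ j k, Measurable (ξ j k)) ∧
  iIndepFun (fun jk : ℕ × ℕ => ξ jk.1 jk.2) P ∧
  (∀ j k, Measure.map (ξ j k) P
      = (volume : Measure ℝ).withDensity fun x => ENNReal.ofReal (p j x)) ∧
  (∀ j, ∃ L : ℝ≥0, LipschitzWith L (p j)) ∧
  (∀ j, 0 < p j 0) ∧
  (∀ j, Function.support (p j) ⊆ Set.Icc (-1 : ℝ) 1)

/-- The trajectory `u_k = S(u_{k-1}) + η_k` of the random dynamical system issued from `u₀`. -/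
def traj {Ω : Type*} (S : H → H) (η : ℕ → Ω → H) (u₀ : Ω → H) : ℕ → Ω → H
  | 0 => u₀
  | k + 1 => fun ω => S (traj S η u₀ k ω) + η (k + 1) ω

/-- The (topological) support of a measure. -/
def msupp {X : Type*} [TopologicalSpace X] [MeasurableSpace X] (μ : Measure X) : Set X :=
  {x | ∀ U ∈ 𝓝 x, 0 < μ U}

/-- The occupation measures `ζ_k = k⁻¹ ∑_{n=0}^{k-1} δ_{x_n}` of a sequence. -/
def occ {X : Type*} [MeasurableSpace X] (x : ℕ → X) (k : ℕ) : ProbabilityMeasure X :=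
  if hk : k = 0 then ⟨Measure.dirac (x 0), Measure.dirac.isProbabilityMeasure⟩
  else
    ⟨(k : ℝ≥0∞)⁻¹ • ∑ n ∈ Finset.range k, Measure.dirac (x n), by
      refine ⟨?_⟩
      simp only [Measure.smul_apply, Measure.finset_sum_apply, measure_univ,
        Finset.sum_const, Finset.card_range, nsmul_eq_mul, mul_one, smul_eq_mul]
      exact ENNReal.inv_mul_cancel (Nat.cast_ne_zero.mpr hk) (ENNReal.natCast_ne_top k)⟩

/-- Large deviation principle for the sequence of events `prob k` (the laws of random
probability measures in `Z`), with rate function `I`. -/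
def LDPof {Z : Type*} [TopologicalSpace Z] (prob : ℕ → Set Z → ℝ≥0∞) (I : Z → ℝ≥0∞) : Prop :=
  (∀ F : Set Z, IsClosed F →
    Filter.limsup (fun k : ℕ => (((k : ℝ)⁻¹ : ℝ) : EReal) * ENNReal.log (prob k F)) atTop
      ≤ -(⨅ σ ∈ F, (I σ : EReal))) ∧
  (∀ G : Set Z, IsOpen G →
    -(⨅ σ ∈ G, (I σ : EReal))
      ≤ Filter.liminf (fun k : ℕ => (((k : ℝ)⁻¹ : ℝ) : EReal) * ENNReal.log (prob k G)) atTop)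

/-- A good rate function: lower semicontinuous with compact level sets. -/
def GoodRate {Z : Type*} [TopologicalSpace Z] (I : Z → ℝ≥0∞) : Prop :=
  LowerSemicontinuous I ∧ ∀ c : ℝ≥0∞, c ≠ ⊤ → IsCompact {σ : Z | I σ ≤ c}

/-- The Feynman–Kac semigroup `𝔓_k^V f(u) = 𝔼_u [f(u_k) exp(∑_{n=1}^k V(u_n))]`. -/
def FK {H : Type} [NormedAddCommGroup H] [InnerProductSpace ℝ H] [CompleteSpace H]
    {Ω : Type} [MeasurableSpace Ω] (P : Measure Ω)
    (S : H → H) (η : ℕ → Ω → H) (V : H → ℝ) (k : ℕ) (f : H → ℝ) (u : H) : ℝ :=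
  ∫ ω, f (traj S η (fun _ => u) k ω) *
    Real.exp (∑ n ∈ Finset.Icc 1 k, V (traj S η (fun _ => u) n ω)) ∂P

/-- The dual `𝔓_1^{V*}` of the Feynman–Kac semigroup, acting on measures:
`𝔓_1^{V*}μ (Γ) = ∫_H 𝔼 [1_Γ(S u + η₁) e^{V(S u + η₁)}] μ(du)`. -/
def dualFK1 {H : Type} [NormedAddCommGroup H] [InnerProductSpace ℝ H] [CompleteSpace H]
    [MeasurableSpace H] {Ω : Type} [MeasurableSpace Ω] (P : Measure Ω)
    (S : H → H) (η : ℕ → Ω → H) (V : H → ℝ) (μ : Measure H) : Measure H :=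
  (μ.bind fun u => Measure.map (fun ω => S u + η 1 ω) P).withDensity
    fun x => ENNReal.ofReal (Real.exp (V x))



set_option linter.unusedSectionVars false

def LipR {X : Type*} [MetricSpace X] (L : ℝ) (f : X → ℝ) : Prop :=
  ∀ x y, |f x - f y| ≤ L * dist x y

structure PF {X : Type*} [MetricSpace X] [CompactSpace X]
    (T : C(X, ℝ) →ₗ[ℝ] C(X, ℝ)) (a q C : ℝ) : Prop where
  pos : ∀ f : C(X, ℝ), 0 ≤ f → 0 ≤ T f
  ha : 0 < a
  one_le : ∀ x, a ≤ T 1 x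
  hq0 : 0 ≤ q
  hq : q < a
  hC : 0 ≤ C
  df : ∀ (f : C(X, ℝ)) (L B : ℝ), 0 ≤ L → LipR L f → (∀ x, |f x| ≤ B) →
    LipR (q * L + C * B) (T f)
  irr : ∀ f : C(X, ℝ), 0 ≤ f → (∃ x, 0 < f x) → ∃ m : ℕ, ∀ x, 0 < (T ^ m) f x

namespace PF

variable {X : Type*} [MetricSpace X] [CompactSpace X]
    {T : C(X, ℝ) →ₗ[ℝ] C(X, ℝ)} {a q C : ℝ}

theorem pow_pos (h : ∀ f : C(X, ℝ), 0 ≤ f → 0 ≤ T f) (k : ℕ) :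
    ∀ f : C(X, ℝ), 0 ≤ f → 0 ≤ (T ^ k) f := by
  induction k with
  | zero => intro f hf; simpa using hf
  | succ k ih => intro f hf; rw [pow_succ, Module.End.mul_apply]; exact ih _ (h _ hf)

theorem pow_mono (h : ∀ f : C(X, ℝ), 0 ≤ f → 0 ≤ T f) (k : ℕ) {f g : C(X, ℝ)}
    (hfg : f ≤ g) : (T ^ k) f ≤ (T ^ k) g := by
  have := pow_pos h k (g - f) (sub_nonneg.2 hfg)
  rw [map_sub] at this
  exact sub_nonneg.1 this

theorem pow_le_of_le (h : ∀ f : C(X, ℝ), 0 ≤ f → 0 ≤ T f) (k : ℕ) {f : C(X, ℝ)} {s : ℝ}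
    (hf : ∀ x, f x ≤ s) (x : X) : (T ^ k) f x ≤ s * (T ^ k) 1 x := by
  have h1 : f ≤ s • (1 : C(X, ℝ)) := by intro x; simpa using hf x
  have := pow_mono h k h1 x
  simpa using this

theorem le_pow_of_le (h : ∀ f : C(X, ℝ), 0 ≤ f → 0 ≤ T f) (k : ℕ) {f : C(X, ℝ)} {s : ℝ}
    (hf : ∀ x, s ≤ f x) (x : X) : s * (T ^ k) 1 x ≤ (T ^ k) f x := by
  have h1 : s • (1 : C(X, ℝ)) ≤ f := by intro x; simpa using hf x
  have := pow_mono h k h1 x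
  simpa using this

theorem one_nonneg' : (0 : C(X, ℝ)) ≤ 1 := by intro x; simp

theorem le_norm (f : C(X, ℝ)) (x : X) : f x ≤ ‖f‖ :=
  (le_abs_self _).trans (by simpa using f.norm_coe_le_norm x)

theorem abs_pow_le (h : ∀ f : C(X, ℝ), 0 ≤ f → 0 ≤ T f) (k : ℕ) (f : C(X, ℝ)) (x : X) :
    |(T ^ k) f x| ≤ ‖f‖ * ‖(T ^ k) 1‖ := by
  have h1 : ∀ x, |f x| ≤ ‖f‖ := fun x => by simpa using f.norm_coe_le_norm x
  have h2 := pow_le_of_le h k (fun x => (abs_le.1 (h1 x)).2) x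
  have h3 := le_pow_of_le h k (fun x => (abs_le.1 (h1 x)).1) x
  have h4 := mul_le_mul_of_nonneg_left (le_norm ((T ^ k) 1) x) (norm_nonneg f)
  rw [abs_le]; constructor <;> linarith

theorem norm_pow_le (h : ∀ f : C(X, ℝ), 0 ≤ f → 0 ≤ T f) (k : ℕ) (f : C(X, ℝ)) :
    ‖(T ^ k) f‖ ≤ ‖f‖ * ‖(T ^ k) 1‖ := by
  rw [ContinuousMap.norm_le _ (by positivity)]
  intro x
  simpa using abs_pow_le h k f x

variable (HP : PF T a q C)
include HP

theorem pow_one_ge (k : ℕ) (x : X) : a ^ k ≤ (T ^ k) 1 x := by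
  induction k with
  | zero => simp
  | succ k ih =>
    have := le_pow_of_le HP.pos k HP.one_le x
    rw [← Module.End.mul_apply, ← pow_succ] at this
    rw [pow_succ]
    nlinarith [HP.ha]

theorem pow_succ_one_ge (k : ℕ) (x : X) : a * (T ^ k) 1 x ≤ (T ^ (k+1)) 1 x := by
  have := le_pow_of_le HP.pos k HP.one_le x
  rwa [← Module.End.mul_apply, ← pow_succ] at this

theorem norm_pos [Nonempty X] (k : ℕ) : 0 < ‖(T ^ k) 1‖ := by
  obtain ⟨x⟩ := ‹Nonempty X›
  exact lt_of_lt_of_le (_root_.pow_pos HP.ha k) ((HP.pow_one_ge k x).trans (le_norm _ x))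

theorem exists_max [Nonempty X] (k : ℕ) : ∃ x, (T ^ k) 1 x = ‖(T ^ k) 1‖ := by
  obtain ⟨x, -, hx⟩ := isCompact_univ.exists_isMaxOn Set.univ_nonempty
    ((T ^ k) 1).continuous.continuousOn
  refine ⟨x, le_antisymm (le_norm _ x) ?_⟩
  have hp : ∀ y, (0:ℝ) ≤ (T ^ k) 1 y := fun y => pow_pos HP.pos k 1 one_nonneg' y
  rw [ContinuousMap.norm_le _ (hp x)]
  intro y
  rw [Real.norm_eq_abs, abs_of_nonneg (hp y)]
  exact hx (Set.mem_univ y)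

theorem norm_succ [Nonempty X] (k : ℕ) : a * ‖(T ^ k) 1‖ ≤ ‖(T ^ (k+1)) 1‖ := by
  obtain ⟨x, hx⟩ := HP.exists_max k
  rw [← hx]
  exact (HP.pow_succ_one_ge k x).trans (le_norm _ x)

theorem lip_pow [Nonempty X] (f : C(X, ℝ)) (L : ℝ) (hL : 0 ≤ L) (hf : LipR L f) :
    ∃ D, 0 ≤ D ∧ ∀ k, LipR (D * ‖(T ^ k) 1‖) ((T ^ k) f) := by
  have haq : 0 < a - q := sub_pos.2 HP.hq
  have hC := HP.hC
  have hq0 := HP.hq0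
  refine ⟨L + C * ‖f‖ / (a - q), by positivity, ?_⟩
  set D := L + C * ‖f‖ / (a - q) with hD
  have hD0 : 0 ≤ D := by positivity
  have hD1 : C * ‖f‖ ≤ (a - q) * D := by
    rw [hD, mul_add, mul_div_cancel₀ _ haq.ne']
    nlinarith [mul_nonneg haq.le hL]
  intro k
  induction k with
  | zero =>
    intro x y
    refine (hf x y).trans ?_
    obtain ⟨z⟩ := ‹Nonempty X›
    have : (1:ℝ) ≤ ‖(T^0) (1 : C(X, ℝ))‖ := by
      simp
    refine mul_le_mul_of_nonneg_right ?_ dist_nonneg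
    have hLD : L ≤ D := by
      rw [hD]; have : 0 ≤ C * ‖f‖ / (a - q) := by positivity
      linarith
    nlinarith
  | succ k ih =>
    have h1 := HP.df _ _ _ (by positivity) ih (fun x => abs_pow_le HP.pos k f x)
    rw [← Module.End.mul_apply, ← pow_succ'] at h1
    intro x y
    refine (h1 x y).trans (mul_le_mul_of_nonneg_right ?_ dist_nonneg)
    have h2 := mul_le_mul_of_nonneg_left (HP.norm_succ k) hD0
    have h3 := mul_le_mul_of_nonneg_right hD1 (norm_nonneg ((T^k) (1 : C(X, ℝ))))
    nlinarith

theorem irr_mono {f : C(X, ℝ)} {m : ℕ} (hm : ∀ x, 0 < (T ^ m) f x) (n : ℕ) (hn : m ≤ n) :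
    ∀ x, 0 < (T ^ n) f x := by
  induction n, hn using Nat.le_induction with
  | base => exact hm
  | succ n hn ih =>
    intro x
    obtain ⟨z, -, hz⟩ := isCompact_univ.exists_isMinOn ⟨x, Set.mem_univ x⟩
      ((T ^ n) f).continuous.continuousOn
    have h1 := le_pow_of_le HP.pos 1 (f := (T^n) f) (s := (T^n) f z)
      (fun y => hz (Set.mem_univ y)) x
    rw [pow_one, ← Module.End.mul_apply, ← pow_succ'] at h1
    exact lt_of_lt_of_le (mul_pos (ih z) (HP.ha.trans_le (HP.one_le x))) h1

theorem unif_irr [Nonempty X] (L : ℝ) (hL : 0 ≤ L) : ∃ m : ℕ, ∃ p : ℝ, 0 < p ∧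
    ∀ f : C(X, ℝ), 0 ≤ f → LipR L f → (∃ v, 1 ≤ f v) → ∀ u, p ≤ (T ^ m) f u := by
  let bump : X → C(X, ℝ) := fun w => ⟨fun x => max 0 (1/2 - L * dist x w), by fun_prop⟩
  have hb0 : ∀ w, 0 ≤ bump w := fun w x => le_max_left _ _
  have hb1 : ∀ w, ∃ m : ℕ, ∀ x, 0 < (T ^ m) (bump w) x := fun w =>
    HP.irr _ (hb0 w) ⟨w, by simp [bump]⟩
  choose m hm using hb1
  have hρ : 0 < 1 / (2 * L + 1) := by positivity
  obtain ⟨t, -, ht, hcov⟩ := (isCompact_univ (X := X)).finite_cover_balls hρ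
  obtain ⟨N, hN⟩ : ∃ N, ∀ w ∈ t, m w ≤ N := by
    obtain ⟨N, hN⟩ := (ht.image m).bddAbove
    exact ⟨N, fun w hw => hN ⟨w, hw, rfl⟩⟩
  have hmin : ∀ w ∈ t, ∃ p : ℝ, 0 < p ∧ ∀ x, p ≤ (T ^ N) (bump w) x := by
    intro w hw
    obtain ⟨z, -, hz⟩ := isCompact_univ.exists_isMinOn Set.univ_nonempty
      ((T ^ N) (bump w)).continuous.continuousOn
    exact ⟨_, HP.irr_mono (hm w) N (hN w hw) z, fun x => hz (Set.mem_univ x)⟩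
  have hp : ∃ p : ℝ, 0 < p ∧ ∀ w ∈ t, ∀ x, p ≤ (T ^ N) (bump w) x := by
    clear hcov hN
    induction t, ht using Set.Finite.induction_on with
    | empty => exact ⟨1, one_pos, by simp⟩
    | @insert w s hw hs ih =>
      obtain ⟨p, hp, h⟩ := ih (fun w' hw' => hmin w' (Set.mem_insert_of_mem _ hw'))
      obtain ⟨p', hp', h'⟩ := hmin w (Set.mem_insert _ _)
      refine ⟨min p p', lt_min hp hp', ?_⟩
      rintro w' (rfl | hw') x
      · exact (min_le_right _ _).trans (h' x)
      · exact (min_le_left _ _).trans (h w' hw' x)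
  obtain ⟨p, hp, hpt⟩ := hp
  refine ⟨N, p, hp, fun f hf0 hfL ⟨v, hv⟩ u => ?_⟩
  obtain ⟨w, hwt, hw⟩ : ∃ w ∈ t, dist v w < 1 / (2 * L + 1) := by
    have := hcov (Set.mem_univ v)
    simpa using this
  refine (hpt w hwt u).trans (pow_mono HP.pos N ?_ u)
  intro x
  refine max_le (hf0 x) ?_
  change 1/2 - L * dist x w ≤ f x
  have h1 := (abs_le.1 (hfL v x)).2
  have h2 : L * dist v w ≤ 1/2 := by
    have := mul_le_mul_of_nonneg_left hw.le hL
    refine this.trans ?_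
    rw [mul_one_div, div_le_div_iff₀ (by positivity) (by positivity)]
    linarith
  have h3 : dist v x ≤ dist v w + dist x w := dist_triangle_right _ _ _
  have h4 := mul_le_mul_of_nonneg_left h3 hL
  linarith

theorem lower [Nonempty X] : ∃ c : ℝ, 0 < c ∧ c ≤ 1 ∧ ∀ k x, c * ‖(T ^ k) 1‖ ≤ (T ^ k) 1 x := by
  obtain ⟨D, hD0, hD⟩ := HP.lip_pow 1 0 le_rfl (fun x y => by simp)
  obtain ⟨m, p, hp, hm⟩ := HP.unif_irr D hD0
  have key : ∀ k x, (p / ‖(T^m) 1‖) * ‖(T ^ k) 1‖ ≤ (T ^ k) 1 x := by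
    intro k x
    have hMk := HP.norm_pos k
    have hMm := HP.norm_pos m
    obtain ⟨v, hv⟩ := HP.exists_max k
    have h1 := hm (‖(T^k) 1‖⁻¹ • (T^k) 1) (fun y => by
        have : (0:ℝ) ≤ (T ^ k) 1 y := pow_pos HP.pos k 1 one_nonneg' y
        change (0:ℝ) ≤ ‖(T^k) 1‖⁻¹ * (T ^ k) 1 y
        positivity) (fun y z => by
        have := hD k y z
        simp only [ContinuousMap.coe_smul, Pi.smul_apply, smul_eq_mul]
        rw [← mul_sub, abs_mul, abs_of_pos (inv_pos.2 hMk), inv_mul_le_iff₀ hMk]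
        linarith) ⟨v, by simp [hv, hMk.ne']⟩ x
    rw [map_smul, ContinuousMap.smul_apply, smul_eq_mul, ← Module.End.mul_apply, ← pow_add,
      add_comm, pow_add, Module.End.mul_apply] at h1
    have h2 := pow_le_of_le HP.pos k (le_norm ((T^m) 1)) x
    rw [inv_mul_eq_div, le_div_iff₀ hMk] at h1
    rw [div_mul_eq_mul_div, div_le_iff₀ hMm]
    linarith
  obtain ⟨x⟩ := ‹Nonempty X›
  refine ⟨_, div_pos hp (HP.norm_pos m), ?_, key⟩
  have h0 := key 0 x
  have : ‖(1 : C(X, ℝ))‖ = 1 := by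
    have : Nonempty X := ⟨x⟩
    exact norm_one
  simpa [this] using h0

end PF



set_option linter.unusedSectionVars false

namespace PF

variable {X : Type*} [MetricSpace X] [CompactSpace X]
    {T : C(X, ℝ) →ₗ[ℝ] C(X, ℝ)} {a q C : ℝ}

theorem norm_add_le (h : ∀ f : C(X, ℝ), 0 ≤ f → 0 ≤ T f) (k l : ℕ) :
    ‖(T ^ (k + l)) 1‖ ≤ ‖(T ^ k) 1‖ * ‖(T ^ l) 1‖ := by
  rw [pow_add, Module.End.mul_apply, mul_comm]
  exact norm_pow_le h k _

theorem exists_lam [Nonempty X] (HP : PF T a q C) : ∃ lam c : ℝ, 0 < lam ∧ 0 < c ∧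
    ∀ k, ‖(T ^ k) 1‖ ≤ lam ^ k / c ∧ ∀ x, c * lam ^ k ≤ (T ^ k) 1 x := by
  obtain ⟨c, hc0, hc1, hc⟩ := HP.lower
  have hM := HP.norm_pos
  have hsup : ∀ k l, c * (‖(T ^ k) 1‖ * ‖(T ^ l) 1‖) ≤ ‖(T ^ (k + l)) 1‖ := by
    intro k l
    obtain ⟨x, hx⟩ := HP.exists_max k
    have h1 := le_pow_of_le HP.pos k (hc l) x
    rw [← Module.End.mul_apply, ← pow_add, hx] at h1
    have h2 := le_norm ((T ^ (k + l)) 1) x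
    linarith
  let u : ℕ → ℝ := fun k => Real.log ‖(T ^ k) 1‖
  let v : ℕ → ℝ := fun k => - (Real.log c + Real.log ‖(T ^ k) 1‖)
  have hu : Subadditive u := by
    intro k l
    simp only [u]
    rw [← Real.log_mul (hM k).ne' (hM l).ne']
    exact Real.log_le_log (hM _) (norm_add_le HP.pos k l)
  have hv : Subadditive v := by
    intro k l
    simp only [v]
    have := Real.log_le_log (by have := hM k; have := hM l; positivity) (hsup k l)
    rw [Real.log_mul hc0.ne' (mul_pos (hM k) (hM l)).ne', Real.log_mul (hM k).ne' (hM l).ne'] at this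
    linarith
  have hlogc : Real.log c ≤ 0 := Real.log_nonpos hc0.le hc1
  have hlow : ∀ k : ℕ, k * Real.log a ≤ Real.log ‖(T ^ k) 1‖ := by
    intro k
    obtain ⟨x⟩ := ‹Nonempty X›
    rw [← Real.log_pow]
    exact Real.log_le_log (_root_.pow_pos HP.ha k) ((HP.pow_one_ge k x).trans (le_norm _ x))
  have hup : ∀ k : ℕ, Real.log ‖(T ^ k) 1‖ ≤ k * Real.log ‖(T ^ 1) 1‖ := by
    intro k
    rw [← Real.log_pow]
    refine Real.log_le_log (hM k) ?_
    induction k with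
    | zero => simp
    | succ k ih =>
      refine (norm_add_le HP.pos k 1).trans ?_
      rw [pow_succ]
      exact mul_le_mul_of_nonneg_right ih (norm_nonneg _)
  have hub : BddBelow (Set.range fun n : ℕ => u n / n) := by
    refine ⟨min (Real.log a) 0, ?_⟩
    rintro _ ⟨n, rfl⟩
    rcases Nat.eq_zero_or_pos n with rfl | hn
    · simp
    · refine (min_le_left _ _).trans ?_
      simp only
      rw [le_div_iff₀ (by exact_mod_cast hn)]
      have := hlow n
      simp only [u]; linarith
  have hvb : BddBelow (Set.range fun n : ℕ => v n / n) := by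
    refine ⟨min (-Real.log ‖(T ^ 1) 1‖) 0, ?_⟩
    rintro _ ⟨n, rfl⟩
    rcases Nat.eq_zero_or_pos n with rfl | hn
    · simp
    · refine (min_le_left _ _).trans ?_
      simp only
      rw [le_div_iff₀ (by exact_mod_cast hn)]
      have := hup n
      simp only [v]; linarith
  have hlim : hv.lim = - hu.lim := by
    refine tendsto_nhds_unique (hv.tendsto_lim hvb) ?_
    have h1 : Tendsto (fun n : ℕ => -(Real.log c / n) - u n / n) atTop (𝓝 (-0 - hu.lim)) :=
      ((tendsto_const_div_atTop_nhds_zero_nat _).neg).sub (hu.tendsto_lim hub)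
    rw [neg_zero, zero_sub] at h1
    refine h1.congr fun n => ?_
    simp only [u, v]; ring
  refine ⟨Real.exp hu.lim, c, Real.exp_pos _, hc0, fun k => ?_⟩
  rw [← Real.exp_nat_mul]
  have h1 : Real.exp (k * hu.lim) ≤ ‖(T ^ k) 1‖ := by
    rw [← Real.le_log_iff_exp_le (hM k)]
    rcases Nat.eq_zero_or_pos k with rfl | hk
    · simp
    · have := hu.lim_le_div hub hk.ne'
      rw [le_div_iff₀ (by exact_mod_cast hk)] at this
      simp only [u] at this; linarith
  have h2 : ‖(T ^ k) 1‖ ≤ Real.exp (k * hu.lim) / c := by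
    rw [le_div_iff₀ hc0, ← Real.log_le_iff_le_exp (by have := hM k; positivity),
      Real.log_mul (hM k).ne' hc0.ne']
    rcases Nat.eq_zero_or_pos k with rfl | hk
    · simpa using hlogc
    · have := hv.lim_le_div hvb hk.ne'
      rw [le_div_iff₀ (by exact_mod_cast hk), hlim] at this
      simp only [v] at this; linarith
  exact ⟨h2, fun x => (mul_le_mul_of_nonneg_left h1 hc0.le).trans (hc k x)⟩

theorem continuous_of_pos (h : ∀ f : C(X, ℝ), 0 ≤ f → 0 ≤ T f) : Continuous T := by
  refine AddMonoidHomClass.continuous_of_bound T ‖T 1‖ fun f => ?_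
  have := norm_pow_le h 1 f
  rw [pow_one] at this
  linarith

/-- Arzela-Ascoli for real functions on a compact metric space. -/
theorem aa (f : ℕ → C(X, ℝ)) (L B : ℝ) (hL : ∀ n, LipR L (f n)) (hB : ∀ n x, |f n x| ≤ B) :
    ∃ g : C(X, ℝ), ∃ φ : ℕ → ℕ, StrictMono φ ∧ Tendsto (f ∘ φ) atTop (𝓝 g) := by
  let E := BoundedContinuousFunction.mkOfCompact (α := X) (β := ℝ)
  have hc : IsCompact (closure (Set.range fun n => E (f n))) := by
    refine BoundedContinuousFunction.arzela_ascoli (Set.Icc (-B) B) isCompact_Icc _ ?_ ?_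
    · rintro _ x ⟨n, rfl⟩
      exact abs_le.1 (hB n x)
    · refine Metric.equicontinuous_of_continuity_modulus (fun d => L * d) ?_ _ ?_
      · have : Continuous fun d : ℝ => L * d := by fun_prop
        simpa using this.tendsto 0
      · rintro x y ⟨_, n, rfl⟩
        exact hL n x y
  obtain ⟨g, -, φ, hφ, hg⟩ := hc.tendsto_subseq (x := fun n => E (f n))
    (fun n => subset_closure ⟨n, rfl⟩)
  refine ⟨g.toContinuousMap, φ, hφ, ?_⟩
  rw [tendsto_iff_norm_sub_tendsto_zero] at hg ⊢
  refine hg.congr fun n => ?_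
  rw [← BoundedContinuousFunction.norm_toContinuousMap_eq]
  rfl

/-- The Cesaro average. -/
def ces (T : C(X, ℝ) →ₗ[ℝ] C(X, ℝ)) (lam : ℝ) (f : C(X, ℝ)) (n : ℕ) : C(X, ℝ) :=
  ((n : ℝ) + 1)⁻¹ • ∑ k ∈ Finset.range (n + 1), (lam ^ k)⁻¹ • (T ^ k) f

theorem ces_apply (lam : ℝ) (f : C(X, ℝ)) (n : ℕ) (x : X) :
    ces T lam f n x = ((n : ℝ) + 1)⁻¹ * ∑ k ∈ Finset.range (n + 1), (lam ^ k)⁻¹ * (T ^ k) f x := by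
  simp [ces]

theorem T_ces {lam : ℝ} (hl : 0 < lam) (f : C(X, ℝ)) (n : ℕ) :
    T (ces T lam f n) = lam • ces T lam f n +
      (lam * ((n : ℝ) + 1)⁻¹) • ((lam ^ (n+1))⁻¹ • (T ^ (n+1)) f - f) := by
  have h1 : T (∑ k ∈ Finset.range (n + 1), (lam ^ k)⁻¹ • (T ^ k) f)
      = lam • ∑ k ∈ Finset.range (n + 1), (lam ^ (k+1))⁻¹ • (T ^ (k+1)) f := by
    rw [map_sum, Finset.smul_sum]
    refine Finset.sum_congr rfl fun k _ => ?_
    rw [map_smul, ← Module.End.mul_apply, ← pow_succ', smul_smul]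
    congr 1
    field_simp
    try ring
  have h2 := Finset.sum_range_succ (fun k => (lam ^ k)⁻¹ • (T ^ k) f) (n+1)
  have h3 := Finset.sum_range_succ' (fun k => (lam ^ k)⁻¹ • (T ^ k) f) (n+1)
  rw [h2] at h3
  have h4 : ∑ k ∈ Finset.range (n + 1), (lam ^ (k+1))⁻¹ • (T ^ (k+1)) f =
     ∑ k ∈ Finset.range (n + 1), (lam ^ k)⁻¹ • (T ^ k) f
      + ((lam ^ (n+1))⁻¹ • (T ^ (n+1)) f - f) := by
    have : (lam ^ 0)⁻¹ • (T ^ 0) f = f := by simp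
    rw [this] at h3
    rw [← add_sub_assoc, h3, add_sub_cancel_right]
  rw [ces, map_smul, h1, h4, smul_add, smul_add, smul_comm, smul_smul, smul_smul, mul_comm (_⁻¹) lam]

theorem eigen [Nonempty X] (HP : PF T a q C) : ∃ lam c L : ℝ, ∃ h : C(X, ℝ), 0 < lam ∧ 0 < c ∧ 0 ≤ L ∧
    (∀ k, ‖(T ^ k) 1‖ ≤ lam ^ k / c) ∧ (∀ x, c ≤ h x) ∧ LipR L h ∧ T h = lam • h := by
  obtain ⟨lam, c, hl, hc, hk⟩ := HP.exists_lam
  obtain ⟨D, hD0, hD⟩ := HP.lip_pow 1 0 le_rfl (fun x y => by simp)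
  have hn : ∀ n : ℕ, (0:ℝ) < (n:ℝ) + 1 := fun n => by positivity
  have hlip : ∀ n, LipR (D / c) (ces T lam 1 n) := by
    intro n x y
    rw [ces_apply, ces_apply, ← mul_sub, ← Finset.sum_sub_distrib, abs_mul, abs_of_pos (inv_pos.2 (hn n)),
      inv_mul_le_iff₀ (hn n)]
    refine (Finset.abs_sum_le_sum_abs _ _).trans ?_
    have : ∀ k ∈ Finset.range (n+1), |(lam ^ k)⁻¹ * (T ^ k) 1 x - (lam ^ k)⁻¹ * (T ^ k) 1 y|
        ≤ D / c * dist x y := by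
      intro k _
      have hlk : 0 < lam ^ k := _root_.pow_pos hl k
      rw [← mul_sub, abs_mul, abs_of_pos (inv_pos.2 hlk), inv_mul_le_iff₀ hlk]
      refine (hD k x y).trans ?_
      have := mul_le_mul_of_nonneg_left (hk k).1 hD0
      have := mul_le_mul_of_nonneg_right this (dist_nonneg (x := x) (y := y))
      refine this.trans (le_of_eq ?_)
      ring
    refine (Finset.sum_le_card_nsmul _ _ _ this).trans ?_
    simp
  have hlow : ∀ n x, c ≤ ces T lam 1 n x := by
    intro n x
    rw [ces_apply, le_inv_mul_iff₀ (hn n)]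
    have : ∀ k ∈ Finset.range (n+1), c ≤ (lam ^ k)⁻¹ * (T ^ k) 1 x := by
      intro k _
      have hlk : 0 < lam ^ k := _root_.pow_pos hl k
      rw [le_inv_mul_iff₀ hlk]
      linarith [(hk k).2 x]
    refine le_trans ?_ (Finset.card_nsmul_le_sum _ _ _ this)
    simp
  have hupk : ∀ k x, (lam ^ k)⁻¹ * (T ^ k) 1 x ≤ 1 / c := by
    intro k x
    have hlk : 0 < lam ^ k := _root_.pow_pos hl k
    rw [inv_mul_le_iff₀ hlk]
    refine (le_norm _ x).trans ((hk k).1.trans (le_of_eq ?_))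
    ring
  have hup : ∀ n x, ces T lam 1 n x ≤ 1 / c := by
    intro n x
    rw [ces_apply, inv_mul_le_iff₀ (hn n)]
    refine (Finset.sum_le_card_nsmul _ _ _ fun k _ => hupk k x).trans ?_
    simp
  obtain ⟨h, φ, hφ, hh⟩ := aa (fun n => ces T lam 1 n) (D/c) (1/c) hlip
    (fun n x => abs_le.2 ⟨by have := hlow n x; have : 0 < 1 / c := by positivity
                             linarith, hup n x⟩)
  have hpt : ∀ x, Tendsto (fun n => ces T lam 1 (φ n) x) atTop (𝓝 (h x)) := fun x =>
    ((continuous_eval_const (F := C(X, ℝ)) x).tendsto h).comp hh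
  refine ⟨lam, c, D/c, h, hl, hc, by positivity, fun k => (hk k).1, ?_, ?_, ?_⟩
  · exact fun x => ge_of_tendsto' (hpt x) (fun n => hlow _ x)
  · exact fun x y => le_of_tendsto' (((hpt x).sub (hpt y)).abs) (fun n => hlip _ x y)
  · refine tendsto_nhds_unique (((continuous_of_pos HP.pos).tendsto h).comp hh) ?_
    have h0 : Tendsto (fun n => (lam * (((φ n : ℕ) : ℝ) + 1)⁻¹) •
        ((lam ^ (φ n+1))⁻¹ • (T ^ (φ n+1)) 1 - (1 : C(X, ℝ)))) atTop (𝓝 0) := by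
      refine squeeze_zero_norm (a := fun n => (lam * (1 / c + 1)) * (1 / (((φ n : ℕ) : ℝ) + 1))) ?_ ?_
      · intro n
        rw [norm_smul, Real.norm_eq_abs, abs_of_pos (mul_pos hl (inv_pos.2 (hn _)))]
        have : ‖(lam ^ (φ n+1))⁻¹ • (T ^ (φ n+1)) 1 - (1 : C(X, ℝ))‖ ≤ 1 / c + 1 := by
          refine (norm_sub_le _ _).trans (add_le_add ?_ (by simp))
          have hlk : 0 < lam ^ (φ n + 1) := _root_.pow_pos hl _
          rw [norm_smul, Real.norm_eq_abs, abs_of_pos (inv_pos.2 hlk), inv_mul_le_iff₀ hlk]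
          refine ((hk _).1.trans (le_of_eq ?_))
          ring
        refine (mul_le_mul_of_nonneg_left this (mul_pos hl (inv_pos.2 (hn _))).le).trans (le_of_eq ?_)
        ring
      · have := (tendsto_one_div_add_atTop_nhds_zero_nat (𝕜 := ℝ)).comp hφ.tendsto_atTop
        simpa using this.const_mul (lam * (1 / c + 1))
    have h1 := (hh.const_smul lam).add h0
    rw [add_zero] at h1
    refine h1.congr fun n => ?_
    exact (T_ces hl 1 (φ n)).symm

end PF



set_option linter.unusedSectionVars false

namespace PF

variable {X : Type*} [MetricSpace X] [CompactSpace X]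
    {T : C(X, ℝ) →ₗ[ℝ] C(X, ℝ)} {a q C : ℝ}

theorem ces_add (lam : ℝ) (f g : C(X, ℝ)) (n : ℕ) :
    ces T lam (f + g) n = ces T lam f n + ces T lam g n := by
  simp [ces, smul_add, Finset.sum_add_distrib]

theorem ces_smul (lam : ℝ) (s : ℝ) (f : C(X, ℝ)) (n : ℕ) :
    ces T lam (s • f) n = s • ces T lam f n := by
  simp only [ces, map_smul]
  rw [smul_comm, Finset.smul_sum (r := s)]
  congr 1
  exact Finset.sum_congr rfl fun k _ => smul_comm _ _ _

theorem ces_T (lam : ℝ) (f : C(X, ℝ)) (n : ℕ) :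
    ces T lam (T f) n = T (ces T lam f n) := by
  simp only [ces, map_smul, map_sum]
  congr 1
  refine Finset.sum_congr rfl fun k _ => ?_
  rw [← Module.End.mul_apply, ← Module.End.mul_apply, ← pow_succ, ← pow_succ']

theorem pow_eig {lam : ℝ} {h : C(X, ℝ)} (hT : T h = lam • h) (k : ℕ) : (T ^ k) h = lam ^ k • h := by
  induction k with
  | zero => simp
  | succ k ih => rw [pow_succ', Module.End.mul_apply, ih, map_smul, hT, smul_smul, ← pow_succ]

variable [MeasurableSpace X] [BorelSpace X]

theorem exists_mu [Nonempty X] (hpos : ∀ f : C(X, ℝ), 0 ≤ f → 0 ≤ T f) {lam c : ℝ} {h : C(X, ℝ)}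
    (hl : 0 < lam) (hc : 0 < c) (hk : ∀ k, ‖(T ^ k) 1‖ ≤ lam ^ k / c) (hh : ∀ x, c ≤ h x)
    (hT : T h = lam • h) :
    ∃ μ : Measure X, IsProbabilityMeasure μ ∧ ∀ f : C(X, ℝ), ∫ x, T f x ∂μ = lam * ∫ x, f x ∂μ := by
  obtain ⟨x0⟩ := ‹Nonempty X›
  have hn : ∀ n : ℕ, (0:ℝ) < (n:ℝ) + 1 := fun n => by positivity
  have hbd : ∀ (f : C(X, ℝ)) (k : ℕ), |(lam ^ k)⁻¹ * (T ^ k) f x0| ≤ ‖f‖ / c := by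
    intro f k
    have hlk : 0 < lam ^ k := _root_.pow_pos hl k
    rw [abs_mul, abs_of_pos (inv_pos.2 hlk), inv_mul_le_iff₀ hlk]
    refine (abs_pow_le hpos k f x0).trans ?_
    refine (mul_le_mul_of_nonneg_left (hk k) (norm_nonneg f)).trans (le_of_eq ?_)
    ring
  have hcb : ∀ (f : C(X, ℝ)) (n : ℕ), |ces T lam f n x0| ≤ ‖f‖ / c := by
    intro f n
    rw [ces_apply, abs_mul, abs_of_pos (inv_pos.2 (hn n)), inv_mul_le_iff₀ (hn n)]
    refine (Finset.abs_sum_le_sum_abs _ _).trans ?_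
    refine (Finset.sum_le_card_nsmul _ _ _ fun k _ => hbd f k).trans ?_
    simp
  let U : Ultrafilter ℕ := hyperfilter ℕ
  have hUle : (U : Filter ℕ) ≤ atTop := Nat.hyperfilter_le_atTop
  have hlim : ∀ f : C(X, ℝ), ∃ l, Tendsto (fun n => ces T lam f n x0) U (𝓝 l) := by
    intro f
    obtain ⟨l, -, hl⟩ := (isCompact_Icc (a := -(‖f‖/c)) (b := ‖f‖/c)).ultrafilter_le_nhds
      (U.map fun n => ces T lam f n x0) (by
        simp only [Ultrafilter.coe_map, le_principal_iff]
        exact Filter.mem_map.2 (Filter.univ_mem' fun n => abs_le.1 (hcb f n)))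
    exact ⟨l, hl⟩
  choose ℓ hℓ using hlim
  have hadd : ∀ f g, ℓ (f + g) = ℓ f + ℓ g := fun f g => by
    refine tendsto_nhds_unique (hℓ _) (((hℓ f).add (hℓ g)).congr fun n => ?_)
    rw [ces_add]; rfl
  have hsmul : ∀ (s : ℝ) f, ℓ (s • f) = s * ℓ f := fun s f => by
    refine tendsto_nhds_unique (hℓ _) (((hℓ f).const_mul s).congr fun n => ?_)
    rw [ces_smul]; rfl
  have hpos' : ∀ f : C(X, ℝ), 0 ≤ f → 0 ≤ ℓ f := fun f hf => by
    refine ge_of_tendsto' (hℓ f) fun n => ?_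
    rw [ces_apply]
    refine mul_nonneg (inv_pos.2 (hn n)).le (Finset.sum_nonneg fun k _ => ?_)
    exact mul_nonneg (inv_pos.2 (_root_.pow_pos hl k)).le (pow_pos hpos k f hf x0)
  have hTl : ∀ f : C(X, ℝ), ℓ (T f) = lam * ℓ f := fun f => by
    have h0 : Tendsto (fun n : ℕ => lam * ces T lam f n x0 +
        (lam * ((n : ℝ) + 1)⁻¹) * ((lam ^ (n+1))⁻¹ * (T ^ (n+1)) f x0 - f x0)) U
          (𝓝 (lam * ℓ f + 0)) := by
      refine ((hℓ f).const_mul lam).add (Tendsto.mono_left ?_ hUle)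
      refine squeeze_zero_norm (a := fun n : ℕ => (lam * (‖f‖ / c + ‖f‖)) * (1 / ((n : ℝ) + 1))) ?_ ?_
      · intro n
        rw [norm_mul, Real.norm_eq_abs, abs_of_pos (mul_pos hl (inv_pos.2 (hn _)))]
        have : ‖(lam ^ (n+1))⁻¹ * (T ^ (n+1)) f x0 - f x0‖ ≤ ‖f‖ / c + ‖f‖ :=
          (norm_sub_le _ _).trans (add_le_add (hbd f _) (f.norm_coe_le_norm x0))
        refine (mul_le_mul_of_nonneg_left this (mul_pos hl (inv_pos.2 (hn _))).le).trans (le_of_eq ?_)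
        ring
      · have := (tendsto_one_div_add_atTop_nhds_zero_nat (𝕜 := ℝ))
        simpa using this.const_mul (lam * (‖f‖ / c + ‖f‖))
    rw [add_zero] at h0
    refine tendsto_nhds_unique (hℓ _) (h0.congr fun n => ?_)
    rw [ces_T, T_ces hl]
    simp
  have hh0 : ℓ h = h x0 := by
    refine tendsto_nhds_unique (hℓ _) (tendsto_const_nhds.congr fun n => ?_)
    rw [ces_apply]
    have : ∀ k ∈ Finset.range (n+1), (lam ^ k)⁻¹ * (T ^ k) h x0 = h x0 := by
      intro k _
      rw [pow_eig hT]
      have hlk : 0 < lam ^ k := _root_.pow_pos hl k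
      simp only [ContinuousMap.smul_apply, smul_eq_mul]
      field_simp
    rw [Finset.sum_congr rfl this]
    have := hn n
    simp only [Finset.sum_const, Finset.card_range, nsmul_eq_mul]
    push_cast
    field_simp
  have hone : 0 < ℓ 1 := by
    have h1 : 0 ≤ ℓ (‖h‖ • 1 + (-1 : ℝ) • h) := hpos' _ fun x => by
      have := le_norm h x
      change (0:ℝ) ≤ ‖h‖ * 1 + (-1) * h x
      linarith
    rw [hadd, hsmul, hsmul, hh0] at h1
    have h2 := hh x0
    have h3 : 0 < ‖h‖ := by have := le_norm h x0; linarith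
    have h4 : 0 < ‖h‖ * ℓ 1 := by linarith
    exact (mul_pos_iff_of_pos_left h3).1 h4
  let Λ0 : CompactlySupportedContinuousMap X ℝ →ₗ[ℝ] ℝ :=
    { toFun := fun f => (ℓ 1)⁻¹ * ℓ f.toContinuousMap
      map_add' := fun f g => by
        rw [← mul_add, ← hadd]; rfl
      map_smul' := fun s f => by
        have := hsmul s f.toContinuousMap
        simp only [RingHom.id_apply, smul_eq_mul]
        rw [← mul_assoc, mul_comm s, mul_assoc, ← this]; rfl }
  let Λ : CompactlySupportedContinuousMap X ℝ →ₚ[ℝ] ℝ := PositiveLinearMap.mk₀ Λ0 (fun f hf =>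
    mul_nonneg (inv_pos.2 hone).le (hpos' _ fun x => hf x))
  have hint : ∀ f : C(X, ℝ), ∫ x, f x ∂(RealRMK.rieszMeasure Λ) = (ℓ 1)⁻¹ * ℓ f := fun f =>
    RealRMK.integral_rieszMeasure Λ (CompactlySupportedContinuousMap.continuousMapEquiv f)
  refine ⟨RealRMK.rieszMeasure Λ, ?_, fun f => ?_⟩
  · have h1 := hint 1
    rw [inv_mul_cancel₀ hone.ne'] at h1
    simp only [ContinuousMap.one_apply, integral_const, smul_eq_mul, mul_one] at h1
    refine ⟨?_⟩
    rw [Measure.real, ENNReal.toReal_eq_one_iff] at h1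
    exact h1
  · rw [hint, hint, hTl]; ring

theorem cint (μ : Measure X) [IsFiniteMeasure μ] (f : C(X, ℝ)) : Integrable (fun x => f x) μ :=
  BoundedContinuousFunction.integrable μ (BoundedContinuousFunction.mkOfCompact f)

theorem meas_ext (μ ν : Measure X) [IsFiniteMeasure μ] [IsFiniteMeasure ν]
    (h : ∀ f : C(X, ℝ), ∀ L, 0 ≤ L → LipR L f → ∫ x, f x ∂μ ≤ ∫ x, f x ∂ν) : μ = ν := by
  have h' : ∀ f : C(X, ℝ), ∀ L, 0 ≤ L → LipR L f → ∫ x, f x ∂μ = ∫ x, f x ∂ν := by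
    intro f L hL hf
    refine le_antisymm (h f L hL hf) ?_
    have := h (-f) L hL (fun x y => by
      have := hf x y
      rw [abs_sub_comm] at this
      simpa [neg_add_eq_sub] using this)
    simp only [ContinuousMap.neg_apply, integral_neg] at this
    linarith
  have key : ∀ F : Set X, IsClosed F → μ F = ν F := by
    intro F hF
    have hδ : ∀ n : ℕ, (0:ℝ) < 1 / ((n:ℝ) + 1) := fun n => by positivity
    have l1 := tendsto_lintegral_thickenedIndicator_of_isClosed μ hF hδ
      tendsto_one_div_add_atTop_nhds_zero_nat
    have l2 := tendsto_lintegral_thickenedIndicator_of_isClosed ν hF hδ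
      tendsto_one_div_add_atTop_nhds_zero_nat
    refine tendsto_nhds_unique l1 (l2.congr fun n => ?_)
    set g := thickenedIndicator (hδ n) F with hg
    apply (ENNReal.toReal_eq_toReal_iff' (lintegral_lt_top_of_nnreal ν g).ne
      (lintegral_lt_top_of_nnreal μ g).ne).mp
    rw [toReal_lintegral_coe_eq_integral g μ, toReal_lintegral_coe_eq_integral g ν]
    have hl := lipschitzWith_thickenedIndicator (hδ n) F
    refine (h' ⟨fun x => (g x : ℝ), by fun_prop⟩
      (((1 / ((n:ℝ) + 1)).toNNReal⁻¹ : ℝ≥0) : ℝ) (NNReal.coe_nonneg _) fun x y => ?_).symm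
    have := hl.dist_le_mul x y
    rwa [NNReal.dist_eq] at this
  apply ext_of_generate_finite _ ?_ isPiSystem_isClosed
  · exact fun F F_closed ↦ key F F_closed
  · exact key _ isClosed_univ
  · rw [BorelSpace.measurable_eq (α := X), borel_eq_generateFrom_isClosed]

theorem uniq_le [Nonempty X] (HP : PF T a q C) {lam c L : ℝ} {h : C(X, ℝ)}
    (hl : 0 < lam) (hc : 0 < c) (hL : 0 ≤ L) (hLh : LipR L h)
    (hk : ∀ k, ‖(T ^ k) 1‖ ≤ lam ^ k / c) (hh : ∀ x, c ≤ h x)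
    (hT : T h = lam • h) (μ ν : Measure X) [IsFiniteMeasure μ] [IsFiniteMeasure ν]
    (hμ : ∀ f : C(X, ℝ), ∫ x, T f x ∂μ = lam * ∫ x, f x ∂μ)
    (hν : ∀ f : C(X, ℝ), ∫ x, T f x ∂ν = lam * ∫ x, f x ∂ν)
    (hμ1 : ∫ x, h x ∂μ = 1) (hν1 : ∫ x, h x ∂ν = 1)
    (f : C(X, ℝ)) (Lf : ℝ) (hLf : 0 ≤ Lf) (hf : LipR Lf f) : ∫ x, f x ∂μ ≤ ∫ x, f x ∂ν := by
  by_contra! hcon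
  set ε := ∫ x, f x ∂μ - ∫ x, f x ∂ν with hε
  have hε0 : 0 < ε := sub_pos.2 hcon
  have hpowint : ∀ (ρ : Measure X) [IsFiniteMeasure ρ]
      (hρ : ∀ f : C(X, ℝ), ∫ x, T f x ∂ρ = lam * ∫ x, f x ∂ρ) (k : ℕ) (g : C(X, ℝ)),
      ∫ x, (T^k) g x ∂ρ = lam ^ k * ∫ x, g x ∂ρ := by
    intro ρ _ hρ k
    induction k with
    | zero => intro g; simp
    | succ k ih => intro g; rw [pow_succ', Module.End.mul_apply, hρ, ih, pow_succ]; ring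
  -- the set of admissible alphas
  let A : Set ℝ := {α | ∃ k : ℕ, ∀ x, α * lam ^ k * h x ≤ (T ^ k) f x}
  have hA : ∀ α ∈ A, α ≤ ∫ x, f x ∂ν := by
    rintro α ⟨k, hα⟩
    have h1 : ∫ x, α * lam ^ k * h x ∂ν ≤ ∫ x, (T ^ k) f x ∂ν :=
      integral_mono ((cint ν h).const_mul _) (cint ν _) hα
    rw [hpowint ν hν, integral_const_mul, hν1] at h1
    have hlk : 0 < lam ^ k := _root_.pow_pos hl k
    nlinarith
  have hAne : A.Nonempty := by
    refine ⟨-(‖f‖ / c), 0, fun x => ?_⟩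
    have h1 : -‖f‖ ≤ f x := (abs_le.1 (by simpa using f.norm_coe_le_norm x)).1
    have h2 : ‖f‖ ≤ ‖f‖ / c * h x := by
      rw [div_mul_eq_mul_div, le_div_iff₀ hc]
      exact mul_le_mul_of_nonneg_left (hh x) (norm_nonneg _)
    simp only [pow_zero, mul_one, Module.End.one_apply]
    linarith
  have hAb : BddAbove A := ⟨_, hA⟩
  set S := sSup A with hS
  obtain ⟨D, hD0, hD⟩ := HP.lip_pow f Lf hLf hf
  have hSle : S ≤ ∫ x, f x ∂ν := csSup_le hAne hA
  -- total mass of μ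
  have hμpos : 0 < μ.real Set.univ := by
    have h1 : ∫ x, h x ∂μ ≤ ∫ x, ‖h‖ ∂μ := integral_mono (cint μ h) (integrable_const _) (le_norm h)
    rw [hμ1, integral_const, smul_eq_mul] at h1
    by_contra! hcon
    have := mul_nonneg_of_nonpos_of_nonpos hcon (neg_nonpos.2 (norm_nonneg h))
    linarith
  set κ := ε / μ.real Set.univ with hκ
  have hκ0 : 0 < κ := div_pos hε0 hμpos
  set L' := (D / c + (|S| + 1) * L) / κ with hL'
  have hL'0 : 0 ≤ L' := by positivity
  obtain ⟨m, p, hp, hm⟩ := HP.unif_irr L' hL'0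
  have hnh : 0 < ‖h‖ := by
    obtain ⟨x⟩ := ‹Nonempty X›
    exact hc.trans_le ((hh x).trans (le_norm h x))
  have hlm : 0 < lam ^ m := _root_.pow_pos hl m
  set δ := κ * p / (lam ^ m * ‖h‖) with hδ
  have hδ0 : 0 < δ := by positivity
  obtain ⟨α, ⟨k, hα⟩, hαS⟩ := exists_lt_of_lt_csSup hAne (show S - min δ 1 < sSup A by
    have : 0 < min δ 1 := lt_min hδ0 one_pos
    linarith)
  have hαS' : α ≤ S := le_csSup hAb ⟨k, hα⟩
  have hαabs : |α| ≤ |S| + 1 := by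
    have h1 := min_le_right δ 1
    have h2 := le_abs_self S
    have h3 := neg_abs_le S
    rw [abs_le]; constructor <;> linarith
  have hlk : 0 < lam ^ k := _root_.pow_pos hl k
  let g : C(X, ℝ) := (κ⁻¹ * (lam ^ k)⁻¹) • ((T ^ k) f - (α * lam ^ k) • h)
  have hg : ∀ x, g x = κ⁻¹ * (lam ^ k)⁻¹ * ((T ^ k) f x - α * lam ^ k * h x) := fun x => rfl
  have hg0 : 0 ≤ g := fun x => by
    change 0 ≤ g x
    rw [hg]
    have := hα x
    have : 0 ≤ (T ^ k) f x - α * lam ^ k * h x := by linarith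
    positivity
  have hgL : LipR L' g := by
    intro x y
    rw [hg, hg, ← mul_sub, abs_mul, abs_of_pos (by positivity : 0 < κ⁻¹ * (lam ^ k)⁻¹)]
    have h1 := hD k x y
    have h2 := hLh x y
    have h3 := (mul_le_mul_of_nonneg_left (hk k) hD0)
    have e1 : (T ^ k) f x - α * lam ^ k * h x - ((T ^ k) f y - α * lam ^ k * h y)
      = ((T ^ k) f x - (T ^ k) f y) - (α * lam ^ k) * (h x - h y) := by ring
    rw [e1]
    have h4 := abs_sub ((T ^ k) f x - (T ^ k) f y) ((α * lam ^ k) * (h x - h y))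
    rw [abs_mul (α * lam ^ k), abs_mul α, abs_of_pos hlk] at h4
    have h5 : |α| * lam ^ k * |h x - h y| ≤ (|S| + 1) * lam ^ k * (L * dist x y) := by gcongr
    have h6 := mul_le_mul_of_nonneg_right h3 (dist_nonneg (x := x) (y := y))
    have h7 : |((T ^ k) f x - (T ^ k) f y) - (α * lam ^ k) * (h x - h y)|
      ≤ lam ^ k * ((D / c + (|S| + 1) * L) * dist x y) := by
      calc _ ≤ D * (lam ^ k / c) * dist x y + (|S| + 1) * lam ^ k * (L * dist x y) := by linarith
        _ = _ := by ring
    calc _ ≤ κ⁻¹ * (lam ^ k)⁻¹ * (lam ^ k * ((D / c + (|S| + 1) * L) * dist x y)) := by gcongr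
      _ = _ := by rw [hL']; field_simp
  have hgv : ∃ v, 1 ≤ g v := by
    by_contra! hlt
    have h1 : ∫ x, g x ∂μ ≤ ∫ x, (1:ℝ) ∂μ := integral_mono (cint μ g) (integrable_const _) fun x => (hlt x).le
    have h2 : ∫ x, g x ∂μ = κ⁻¹ * (∫ x, f x ∂μ - α) := by
      simp_rw [hg]
      rw [integral_const_mul, integral_sub (cint μ _) ((cint μ h).const_mul _), integral_const_mul,
        hpowint μ hμ, hμ1]
      field_simp
    have h3 : (κ⁻¹ * ε) = μ.real Set.univ := by rw [hκ]; field_simp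
    obtain ⟨z, -, hz⟩ := isCompact_univ.exists_isMaxOn Set.univ_nonempty g.continuous.continuousOn
    have h4 : ∫ x, g x ∂μ ≤ ∫ x, g z ∂μ := integral_mono (cint μ g) (integrable_const _)
      fun x => hz (Set.mem_univ x)
    rw [integral_const, smul_eq_mul] at h4
    have h5 : κ⁻¹ * ε ≤ κ⁻¹ * (∫ x, f x ∂μ - α) :=
      mul_le_mul_of_nonneg_left (by linarith) (inv_pos.2 hκ0).le
    have h6 := mul_lt_mul_of_pos_left (hlt z) hμpos
    linarith
  have hfin : α + δ ∈ A := by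
    refine ⟨m + k, fun x => ?_⟩
    have h1 := hm g hg0 hgL hgv x
    have h2 : (T ^ m) g x = κ⁻¹ * (lam ^ k)⁻¹ * ((T ^ (m + k)) f x - α * lam ^ k * (lam ^ m * h x)) := by
      simp only [g, map_smul, map_sub, pow_eig hT, pow_add, Module.End.mul_apply]
      rfl
    rw [h2] at h1
    have h3 := le_norm h x
    have h4 : δ * lam ^ (m + k) * h x ≤ κ * lam ^ k * p := by
      rw [hδ, pow_add]
      calc _ ≤ κ * p / (lam ^ m * ‖h‖) * (lam ^ m * lam ^ k) * ‖h‖ := by gcongr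
        _ = _ := by field_simp
    have h5 : κ * lam ^ k * p ≤ (T ^ (m + k)) f x - α * lam ^ k * (lam ^ m * h x) := by
      have := mul_le_mul_of_nonneg_left h1 (by positivity : 0 ≤ κ * lam ^ k)
      refine this.trans (le_of_eq ?_)
      field_simp
    have h6 : α * lam ^ k * (lam ^ m * h x) = α * lam ^ (m + k) * h x := by rw [pow_add]; ring
    rw [h6] at h5
    linarith
  have := le_csSup hAb hfin
  have := min_le_left δ 1
  linarith

end PF



set_option linter.unusedSectionVars false

namespace PF

variable {X : Type*} [MetricSpace X] [CompactSpace X]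

def expC (W : C(X, ℝ)) : C(X, ℝ) := ⟨fun x => Real.exp (W x), by fun_prop⟩

@[simp] theorem expC_apply (W : C(X, ℝ)) (x : X) : expC W x = Real.exp (W x) := rfl

/-- The one step Feynman-Kac operator. -/
def TW (T0 : C(X, ℝ) →ₗ[ℝ] C(X, ℝ)) (W : C(X, ℝ)) : C(X, ℝ) →ₗ[ℝ] C(X, ℝ) :=
  T0 ∘ₗ LinearMap.mulLeft ℝ (expC W)

theorem TW_apply (T0 : C(X, ℝ) →ₗ[ℝ] C(X, ℝ)) (W f : C(X, ℝ)) : TW T0 W f = T0 (expC W * f) := rfl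

theorem TW_pos {T0 : C(X, ℝ) →ₗ[ℝ] C(X, ℝ)} (h0 : ∀ f : C(X, ℝ), 0 ≤ f → 0 ≤ T0 f) (W : C(X, ℝ)) :
    ∀ f : C(X, ℝ), 0 ≤ f → 0 ≤ TW T0 W f := fun f hf =>
  h0 _ fun x => mul_nonneg (Real.exp_pos _).le (hf x)

theorem TW_one_ge {T0 : C(X, ℝ) →ₗ[ℝ] C(X, ℝ)} (h0 : ∀ f : C(X, ℝ), 0 ≤ f → 0 ≤ T0 f)
    (h1 : T0 1 = 1) (W : C(X, ℝ)) (x : X) : Real.exp (-‖W‖) ≤ TW T0 W 1 x := by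
  have := le_pow_of_le h0 1 (f := expC W * 1) (s := Real.exp (-‖W‖)) (fun y => by
    have h1 : -‖W‖ ≤ W y := (abs_le.1 (by simpa using W.norm_coe_le_norm y)).1
    simpa using h1) x
  rw [pow_one, h1] at this
  simpa [TW_apply] using this

theorem TW_pow_one_pos {T0 : C(X, ℝ) →ₗ[ℝ] C(X, ℝ)} (h0 : ∀ f : C(X, ℝ), 0 ≤ f → 0 ≤ T0 f)
    (h1 : T0 1 = 1) (W : C(X, ℝ)) (k : ℕ) (x : X) : 0 < (TW T0 W ^ k) 1 x := by
  have : ∀ x, Real.exp (-‖W‖) ^ k ≤ (TW T0 W ^ k) 1 x := by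
    induction k with
    | zero => simp
    | succ k ih =>
      intro x
      have := le_pow_of_le (TW_pos h0 W) k (TW_one_ge h0 h1 W) x
      rw [← Module.End.mul_apply, ← pow_succ] at this
      rw [pow_succ]
      nlinarith [ih x, Real.exp_pos (-‖W‖)]
  exact lt_of_lt_of_le (by positivity) (this x)

theorem exists_min_pos [Nonempty X] (w : C(X, ℝ)) (hw : ∀ x, 0 < w x) : ∃ c, 0 < c ∧ ∀ x, c ≤ w x := by
  obtain ⟨z, -, hz⟩ := isCompact_univ.exists_isMinOn Set.univ_nonempty w.continuous.continuousOn
  exact ⟨w z, hw z, fun x => hz (Set.mem_univ x)⟩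

theorem lim_cmp [Nonempty X] {T0 : C(X, ℝ) →ₗ[ℝ] C(X, ℝ)} (h0 : ∀ f : C(X, ℝ), 0 ≤ f → 0 ≤ T0 f)
    (h1 : T0 1 = 1) {W w : C(X, ℝ)} (hw : ∀ x, 0 < w x) {u : X} {l : ℝ}
    (hl : Tendsto (fun k : ℕ => (k : ℝ)⁻¹ * Real.log ((TW T0 W ^ k) 1 u)) atTop (𝓝 l)) :
    Tendsto (fun k : ℕ => (k : ℝ)⁻¹ * Real.log ((TW T0 W ^ k) w u)) atTop (𝓝 l) := by
  obtain ⟨c, hc, hcw⟩ := exists_min_pos w hw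
  have hn : 0 < ‖w‖ := hc.trans_le ((hcw u).trans (le_norm w u))
  have hz : ∀ d : ℝ, Tendsto (fun k : ℕ => (k : ℝ)⁻¹ * d + (k : ℝ)⁻¹ * Real.log ((TW T0 W ^ k) 1 u))
      atTop (𝓝 l) := by
    intro d
    have := (tendsto_inv_atTop_nhds_zero_nat (𝕜 := ℝ)).mul_const d |>.add hl
    simpa using this
  refine tendsto_of_tendsto_of_tendsto_of_le_of_le (hz (Real.log c)) (hz (Real.log ‖w‖)) ?_ ?_
  · intro k
    have hp := TW_pow_one_pos h0 h1 W k u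
    simp only
    rw [← mul_add, ← Real.log_mul hc.ne' hp.ne']
    refine mul_le_mul_of_nonneg_left (Real.log_le_log (by positivity) ?_) (by positivity)
    exact le_pow_of_le (TW_pos h0 W) k hcw u
  · intro k
    have hp := TW_pow_one_pos h0 h1 W k u
    simp only
    rw [← mul_add, ← Real.log_mul hn.ne' hp.ne']
    have h2 := le_pow_of_le (TW_pos h0 W) k hcw u
    refine mul_le_mul_of_nonneg_left (Real.log_le_log (lt_of_lt_of_le (by positivity) h2) ?_) (by positivity)
    exact pow_le_of_le (TW_pos h0 W) k (le_norm w) u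

theorem Q_eig [Nonempty X] {T0 : C(X, ℝ) →ₗ[ℝ] C(X, ℝ)} (h0 : ∀ f : C(X, ℝ), 0 ≤ f → 0 ≤ T0 f)
    (h1 : T0 1 = 1) {W w : C(X, ℝ)} (hw : ∀ x, 0 < w x) {u : X} {l θ : ℝ} (hθ : 0 < θ)
    (hl : Tendsto (fun k : ℕ => (k : ℝ)⁻¹ * Real.log ((TW T0 W ^ k) 1 u)) atTop (𝓝 l))
    (he : TW T0 W w = θ • w) : l = Real.log θ := by
  refine tendsto_nhds_unique (lim_cmp h0 h1 hw hl) ?_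
  have : Tendsto (fun k : ℕ => Real.log θ + (k : ℝ)⁻¹ * Real.log (w u)) atTop (𝓝 (Real.log θ)) := by
    have := ((tendsto_inv_atTop_nhds_zero_nat (𝕜 := ℝ)).mul_const (Real.log (w u))).const_add (Real.log θ)
    simpa using this
  refine this.congr' ?_
  filter_upwards [eventually_gt_atTop 0] with k hk
  have hk' : (0:ℝ) < k := by exact_mod_cast hk
  rw [pow_eig he, ContinuousMap.smul_apply, smul_eq_mul,
    Real.log_mul (_root_.pow_pos hθ k).ne' (hw u).ne', Real.log_pow]
  field_simp

def logC (w : C(X, ℝ)) (hw : ∀ x, 0 < w x) : C(X, ℝ) :=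
  ⟨fun x => Real.log (w x), w.continuous.log fun x => (hw x).ne'⟩

def invC (w : C(X, ℝ)) (hw : ∀ x, 0 < w x) : C(X, ℝ) :=
  ⟨fun x => (w x)⁻¹, w.continuous.inv₀ fun x => (hw x).ne'⟩

variable [MeasurableSpace X] [BorelSpace X]

theorem int_wd (μ : Measure X) (w : C(X, ℝ)) (hw : ∀ x, 0 < w x) (f : X → ℝ) :
    ∫ x, f x ∂(μ.withDensity fun x => ENNReal.ofReal (w x)) = ∫ x, w x * f x ∂μ := by
  rw [integral_withDensity_eq_integral_toReal_smul (by fun_prop) (by simp)]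
  refine integral_congr_ae (Eventually.of_forall fun x => ?_)
  simp [ENNReal.toReal_ofReal (hw x).le]

theorem fin_wd (μ : Measure X) [IsFiniteMeasure μ] (w : C(X, ℝ)) :
    IsFiniteMeasure (μ.withDensity fun x => ENNReal.ofReal (w x)) :=
  isFiniteMeasure_withDensity_ofReal (cint μ w).2

section equil

variable [Nonempty X] {T0 : C(X, ℝ) →ₗ[ℝ] C(X, ℝ)} (h0 : ∀ f : C(X, ℝ), 0 ≤ f → 0 ≤ T0 f)
    (h1 : T0 1 = 1) (Q : C(X, ℝ) → ℝ)
    (hQ : ∀ W u, Tendsto (fun k : ℕ => (k : ℝ)⁻¹ * Real.log ((TW T0 W ^ k) 1 u)) atTop (𝓝 (Q W)))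
    (V h : C(X, ℝ)) (lam : ℝ) (hl : 0 < lam) (hh : ∀ x, 0 < h x) (hT : TW T0 V h = lam • h)

include h0 h1 hQ hl hh hT in
/-- An equilibrium measure is stationary for the Doob transform. -/
theorem stat_of_equil (σ : Measure X) [IsProbabilityMeasure σ]
    (hσ : ∀ W : C(X, ℝ), ∫ x, W x ∂σ - Q W ≤ ∫ x, V x ∂σ - Q V) (f : C(X, ℝ)) :
    ∫ x, f x ∂σ ≤ ∫ x, (lam⁻¹ * (h x)⁻¹) * TW T0 V (h * f) x ∂σ := by
  have hTp := TW_pos h0 V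
  have hQV : Q V = Real.log lam := by
    obtain ⟨u⟩ := ‹Nonempty X›
    have : Nonempty X := ⟨u⟩
    exact Q_eig h0 h1 hh hl (hQ V u) hT
  let Sf : C(X, ℝ) → C(X, ℝ) := fun f => lam⁻¹ • (invC h hh * TW T0 V (h * f))
  have hSf : ∀ f x, Sf f x = (lam⁻¹ * (h x)⁻¹) * TW T0 V (h * f) x := fun f x => by
    simp [Sf, invC, mul_assoc]
  change ∫ x, f x ∂σ ≤ _
  simp_rw [← hSf]
  have key : ∀ ε : ℝ, 0 < ε → ε * ‖f‖ ≤ 1 → ∫ x, f x ∂σ ≤ ∫ x, Sf f x ∂σ + ε * ‖f‖ ^ 2 := by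
    intro ε hε hε1
    let g := expC (ε • f)
    have hg : ∀ x, 0 < g x := fun x => Real.exp_pos _
    obtain ⟨c, hc, hcg⟩ := exists_min_pos (h * g) (fun x => mul_pos (hh x) (hg x))
    have hTg : ∀ x, 0 < TW T0 V (h * g) x := fun x => by
      have := le_pow_of_le hTp 1 hcg x
      have h2 := TW_one_ge h0 h1 V x
      rw [pow_one] at this
      refine lt_of_lt_of_le (mul_pos hc (lt_of_lt_of_le (Real.exp_pos _) h2)) this
    have hSg : ∀ x, 0 < Sf g x := fun x => by
      rw [hSf]; have := hTg x; have := hh x; positivity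
    let W := V + ε • f - logC (Sf g) hSg
    have hW : TW T0 W (h * Sf g) = lam • (h * Sf g) := by
      have e1 : expC W * (h * Sf g) = expC V * (h * g) := by
        ext x
        simp only [W, ContinuousMap.mul_apply, expC_apply, ContinuousMap.sub_apply,
          ContinuousMap.add_apply, logC, ContinuousMap.coe_mk, Real.exp_sub, Real.exp_log (hSg x),
          Real.exp_add, g]
        have := (hSg x).ne'
        simp only [g] at this
        field_simp
      rw [TW_apply, e1, ← TW_apply]
      ext x
      have := (hh x).ne'
      simp only [ContinuousMap.smul_apply, ContinuousMap.mul_apply, smul_eq_mul, hSf]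
      field_simp
    have hQW : Q W = Real.log lam := by
      obtain ⟨u⟩ := ‹Nonempty X›
      have : Nonempty X := ⟨u⟩
      exact Q_eig h0 h1 (fun x => mul_pos (hh x) (hSg x)) hl (hQ W u) hW
    have h2 := hσ W
    rw [hQW, hQV] at h2
    have h3 : ∫ x, W x ∂σ = ∫ x, V x ∂σ + ε * ∫ x, f x ∂σ - ∫ x, logC (Sf g) hSg x ∂σ := by
      have hi : Integrable (fun x => V x + ε * f x) σ :=
        (cint σ V).add ((cint σ f).const_mul ε)
      rw [← integral_const_mul, ← integral_add (cint σ V) ((cint σ f).const_mul ε),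
        ← integral_sub hi (cint σ _)]
      rfl
    have h4 : ∀ x, logC (Sf g) hSg x ≤ ε * Sf f x + ε ^ 2 * ‖f‖ ^ 2 := by
      intro x
      have a1 : Real.log (Sf g x) ≤ Sf g x - 1 := Real.log_le_sub_one_of_pos (hSg x)
      refine a1.trans ?_
      have a2 : g ≤ 1 + ε • f + (ε ^ 2 * ‖f‖ ^ 2) • 1 := by
        intro y
        change Real.exp (ε * f y) ≤ 1 + ε * f y + ε ^ 2 * ‖f‖ ^ 2 * 1
        have b1 : |f y| ≤ ‖f‖ := by simpa using f.norm_coe_le_norm y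
        have b2 : |ε * f y| ≤ 1 := by
          rw [abs_mul, abs_of_pos hε]
          exact (mul_le_mul_of_nonneg_left b1 hε.le).trans hε1
        have b3 := (abs_le.1 (Real.abs_exp_sub_one_sub_id_le b2)).2
        have b4 : f y ^ 2 ≤ ‖f‖ ^ 2 := by rw [← sq_abs]; gcongr
        have b5 := mul_le_mul_of_nonneg_left b4 (sq_nonneg ε)
        nlinarith
      have a3 : h * g ≤ (1 + ε ^ 2 * ‖f‖ ^ 2) • h + ε • (h * f) := by
        intro y
        have := mul_le_mul_of_nonneg_left (a2 y) (hh y).le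
        change h y * g y ≤ (1 + ε ^ 2 * ‖f‖ ^ 2) * h y + ε * (h y * f y)
        change h y * g y ≤ h y * (1 + ε * f y + ε ^ 2 * ‖f‖ ^ 2 * 1) at this
        linarith
      have a4 := pow_mono hTp 1 a3 x
      rw [pow_one, map_add, map_smul, map_smul, hT] at a4
      change TW T0 V (h * g) x ≤ (1 + ε ^ 2 * ‖f‖ ^ 2) * (lam * h x) + ε * TW T0 V (h * f) x at a4
      rw [hSf, hSf]
      have hx := hh x
      have a5 := mul_le_mul_of_nonneg_left a4 (by positivity : 0 ≤ lam⁻¹ * (h x)⁻¹)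
      have a6 : lam⁻¹ * (h x)⁻¹ * ((1 + ε ^ 2 * ‖f‖ ^ 2) * (lam * h x) + ε * TW T0 V (h * f) x)
        = (1 + ε ^ 2 * ‖f‖ ^ 2) + ε * (lam⁻¹ * (h x)⁻¹ * TW T0 V (h * f) x) := by
        field_simp
      linarith
    have h5 : ∫ x, logC (Sf g) hSg x ∂σ ≤ ∫ x, (ε * Sf f x + ε ^ 2 * ‖f‖ ^ 2) ∂σ :=
      integral_mono (cint σ _) (((cint σ _).const_mul _).add (integrable_const _)) h4
    rw [integral_add ((cint σ _).const_mul _) (integrable_const _), integral_const_mul, integral_const] at h5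
    simp only [probReal_univ, one_smul] at h5
    have h6 : ε * ∫ x, f x ∂σ ≤ ε * (∫ x, Sf f x ∂σ + ε * ‖f‖ ^ 2) := by
      rw [h3] at h2
      nlinarith
    exact le_of_mul_le_mul_left h6 hε
  refine le_of_forall_pos_le_add fun δ hδ => ?_
  set ε := min (1 / (‖f‖ + 1)) (δ / (‖f‖ ^ 2 + 1)) with hεd
  have hε : 0 < ε := lt_min (by positivity) (by positivity)
  have := key ε hε (by
    have h1 : ε * (‖f‖ + 1) ≤ 1 := by
      rw [← le_div_iff₀ (by positivity)]; exact min_le_left _ _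
    nlinarith)
  have h2 : ε * (‖f‖ ^ 2 + 1) ≤ δ := by
    rw [← le_div_iff₀ (by positivity)]; exact min_le_right _ _
  linarith

include h0 h1 hQ hl hh hT in
theorem equil_of_eig (μ : Measure X) [IsProbabilityMeasure μ]
    (hμ : ∀ f : C(X, ℝ), ∫ x, TW T0 V f x ∂μ = lam * ∫ x, f x ∂μ) (hμ1 : ∫ x, h x ∂μ = 1)
    (W : C(X, ℝ)) : ∫ x, h x * W x ∂μ - Q W ≤ ∫ x, h x * V x ∂μ - Q V := by
  have hTp := TW_pos h0 V
  have hQV : Q V = Real.log lam := by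
    obtain ⟨u⟩ := ‹Nonempty X›
    have : Nonempty X := ⟨u⟩
    exact Q_eig h0 h1 hh hl (hQ V u) hT
  set F := W - V with hF
  have hFW : ∀ f, TW T0 W f = TW T0 V (expC F * f) := fun f => by
    rw [TW_apply, TW_apply]
    congr 1
    ext x
    simp only [ContinuousMap.mul_apply, expC_apply, hF, ContinuousMap.sub_apply, ← mul_assoc, ← Real.exp_add]
    congr 2
    ring
  have hmi : ∀ f : C(X, ℝ), Integrable (fun x => h x * f x) μ := fun f => cint μ (h * f)
  have key : ∀ k : ℕ, ∃ φ : C(X, ℝ), (∀ x, Real.exp (φ x) * (lam ^ k * h x) = (TW T0 W ^ k) h x) ∧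
      (k : ℝ) * ∫ x, h x * F x ∂μ ≤ ∫ x, h x * φ x ∂μ ∧ ∀ x, |φ x| ≤ k * ‖F‖ := by
    intro k
    induction k with
    | zero => exact ⟨0, by simp, by simp, by simp⟩
    | succ k ih =>
      obtain ⟨φ, p1, p2, p3⟩ := ih
      have hstep : (TW T0 W ^ (k+1)) h = lam ^ k • TW T0 V (h * expC (F + φ)) := by
        rw [pow_succ', Module.End.mul_apply, hFW, ← map_smul]
        congr 1
        ext x
        simp only [ContinuousMap.mul_apply, ← p1, expC_apply, ContinuousMap.smul_apply, smul_eq_mul,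
          ContinuousMap.add_apply, Real.exp_add]
        ring
      have hFb : ∀ x, |F x| ≤ ‖F‖ := fun x => by simpa using F.norm_coe_le_norm x
      have hup : ∀ x, TW T0 V (h * expC (F + φ)) x ≤ Real.exp ((k+1) * ‖F‖) * (lam * h x) := by
        intro x
        have := pow_mono hTp 1 (f := h * expC (F + φ)) (g := Real.exp ((k+1) * ‖F‖) • h) (fun y => by
          change h y * Real.exp (F y + φ y) ≤ Real.exp ((k+1) * ‖F‖) * h y
          rw [mul_comm]
          have b1 := (abs_le.1 (hFb y)).2
          have b2 := (abs_le.1 (p3 y)).2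
          exact mul_le_mul_of_nonneg_right (Real.exp_le_exp.2 (by linarith)) (hh y).le) x
        rw [pow_one, map_smul, hT] at this
        exact this
      have hlo : ∀ x, Real.exp (-((k+1) * ‖F‖)) * (lam * h x) ≤ TW T0 V (h * expC (F + φ)) x := by
        intro x
        have := pow_mono hTp 1 (g := h * expC (F + φ)) (f := Real.exp (-((k+1) * ‖F‖)) • h) (fun y => by
          change Real.exp (-((k+1) * ‖F‖)) * h y ≤ h y * Real.exp (F y + φ y)
          rw [mul_comm (h y)]
          have b1 := (abs_le.1 (hFb y)).1
          have b2 := (abs_le.1 (p3 y)).1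
          exact mul_le_mul_of_nonneg_right (Real.exp_le_exp.2 (by linarith)) (hh y).le) x
        rw [pow_one, map_smul, hT] at this
        exact this
      let ψ : C(X, ℝ) := lam⁻¹ • (invC h hh * TW T0 V (h * expC (F + φ)))
      have hψ : ∀ x, ψ x * (lam * h x) = TW T0 V (h * expC (F + φ)) x := fun x => by
        have := (hh x).ne'
        simp only [ψ, ContinuousMap.smul_apply, ContinuousMap.mul_apply, invC, ContinuousMap.coe_mk, smul_eq_mul]
        field_simp
      have hlh : ∀ x, 0 < lam * h x := fun x => mul_pos hl (hh x)
      have hψ1 : ∀ x, Real.exp (-((k+1) * ‖F‖)) ≤ ψ x := fun x =>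
        le_of_mul_le_mul_right ((hlo x).trans_eq (hψ x).symm) (hlh x)
      have hψ2 : ∀ x, ψ x ≤ Real.exp ((k+1) * ‖F‖) := fun x =>
        le_of_mul_le_mul_right ((hψ x).trans_le (hup x)) (hlh x)
      have hψ0 : ∀ x, 0 < ψ x := fun x => lt_of_lt_of_le (Real.exp_pos _) (hψ1 x)
      refine ⟨logC ψ hψ0, ?_, ?_, ?_⟩
      · intro x
        rw [hstep]
        change Real.exp (Real.log (ψ x)) * (lam ^ (k+1) * h x) = lam ^ k * TW T0 V (h * expC (F + φ)) x
        rw [Real.exp_log (hψ0 x), ← hψ]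
        ring
      · -- Jensen
        have hJ : ∀ x, lam⁻¹ * TW T0 V (h * (F + φ)) x ≤ h x * logC ψ hψ0 x := by
          intro x
          set s := lam⁻¹ * (h x)⁻¹ * TW T0 V (h * (F + φ)) x with hs
          have hhx := (hh x).ne'
          have b1 := pow_mono hTp 1 (g := h * expC (F + φ))
            (f := Real.exp s • ((1 - s) • h + h * (F + φ))) (fun y => by
              change Real.exp s * ((1 - s) * h y + h y * (F y + φ y)) ≤ h y * Real.exp (F y + φ y)
              have c1 := Real.add_one_le_exp (F y + φ y - s)
              have c2 := mul_le_mul_of_nonneg_left c1 (mul_pos (Real.exp_pos s) (hh y)).le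
              have c3 : Real.exp s * h y * Real.exp (F y + φ y - s) = h y * Real.exp (F y + φ y) := by
                rw [Real.exp_sub]; have := (Real.exp_pos s).ne'; field_simp
              rw [c3] at c2
              refine le_trans (le_of_eq ?_) c2
              ring) x
          rw [pow_one, map_smul, map_add, map_smul, hT] at b1
          change Real.exp s * ((1 - s) * (lam * h x) + TW T0 V (h * (F + φ)) x) ≤
            TW T0 V (h * expC (F + φ)) x at b1
          have e1 : TW T0 V (h * (F + φ)) x = s * (lam * h x) := by rw [hs]; field_simp
          rw [e1, ← hψ] at b1
          have b2 : Real.exp s ≤ ψ x := by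
            refine le_of_mul_le_mul_right (le_trans (le_of_eq ?_) b1) (hlh x)
            ring
          have b3 : s ≤ Real.log (ψ x) := (Real.le_log_iff_exp_le (hψ0 x)).2 b2
          rw [e1]
          have := mul_le_mul_of_nonneg_left b3 (hh x).le
          refine le_trans (le_of_eq ?_) this
          field_simp
        have h2 : ∫ x, lam⁻¹ * TW T0 V (h * (F + φ)) x ∂μ ≤ ∫ x, h x * logC ψ hψ0 x ∂μ :=
          integral_mono ((cint μ _).const_mul _) (hmi _) hJ
        rw [integral_const_mul, hμ, ← mul_assoc, inv_mul_cancel₀ hl.ne', one_mul] at h2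
        have h3 : ∫ x, (h * (F + φ)) x ∂μ = ∫ x, h x * F x ∂μ + ∫ x, h x * φ x ∂μ := by
          rw [← integral_add (hmi F) (hmi φ)]
          refine integral_congr_ae (Eventually.of_forall fun x => ?_)
          simp [mul_add]
        push_cast
        linarith
      · intro x
        change |Real.log (ψ x)| ≤ _
        push_cast
        rw [abs_le]
        exact ⟨(Real.le_log_iff_exp_le (hψ0 x)).2 (hψ1 x), (Real.log_le_iff_le_exp (hψ0 x)).2 (hψ2 x)⟩
  choose φ p1 p2 p3 using key
  have hpt : ∀ x, Tendsto (fun k : ℕ => h x * ((k : ℝ)⁻¹ * φ k x)) atTop (𝓝 (h x * (Q W - Q V))) := by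
    intro x
    refine Tendsto.const_mul _ ?_
    have t1 := lim_cmp h0 h1 hh (hQ W x)
    have t2 := t1.sub (((tendsto_inv_atTop_nhds_zero_nat (𝕜 := ℝ)).mul_const (Real.log (h x))).const_add (Q V))
    rw [zero_mul, add_zero] at t2
    refine t2.congr' ?_
    filter_upwards [eventually_gt_atTop 0] with k hk
    have hk' : (0:ℝ) < k := by exact_mod_cast hk
    rw [← p1 k x, Real.log_mul (Real.exp_pos _).ne' (mul_pos (_root_.pow_pos hl k) (hh x)).ne',
      Real.log_mul (_root_.pow_pos hl k).ne' (hh x).ne', Real.log_exp, Real.log_pow, hQV]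
    field_simp
    ring
  have hdct : Tendsto (fun k : ℕ => ∫ x, h x * ((k : ℝ)⁻¹ * φ k x) ∂μ) atTop
      (𝓝 (∫ x, h x * (Q W - Q V) ∂μ)) := by
    refine tendsto_integral_of_dominated_convergence (fun _ => ‖h‖ * ‖F‖) ?_ (integrable_const _) ?_
      (Eventually.of_forall hpt)
    · intro k
      exact (cint μ (h * ((k:ℝ)⁻¹ • φ k))).aestronglyMeasurable
    · intro k
      refine Eventually.of_forall fun x => ?_
      rw [norm_mul, norm_mul]
      refine mul_le_mul (h.norm_coe_le_norm x) ?_ (by positivity) (by positivity)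
      rw [norm_inv, Real.norm_natCast, Real.norm_eq_abs]
      rcases Nat.eq_zero_or_pos k with rfl | hk
      · simp
      · have hk' : (0:ℝ) < k := by exact_mod_cast hk
        rw [inv_mul_le_iff₀ hk']
        exact p3 k x
  rw [integral_mul_const, hμ1, one_mul] at hdct
  have hge : ∫ x, h x * F x ∂μ ≤ Q W - Q V := by
    refine ge_of_tendsto hdct ?_
    filter_upwards [eventually_gt_atTop 0] with k hk
    have hk' : (0:ℝ) < k := by exact_mod_cast hk
    have e : ∫ x, h x * ((k : ℝ)⁻¹ * φ k x) ∂μ = (k:ℝ)⁻¹ * ∫ x, h x * φ k x ∂μ := by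
      rw [← integral_const_mul]
      refine integral_congr_ae (Eventually.of_forall fun x => ?_)
      simp only; ring
    rw [e, le_inv_mul_iff₀ hk']
    exact p2 k
  have e : ∫ x, h x * F x ∂μ = ∫ x, h x * W x ∂μ - ∫ x, h x * V x ∂μ := by
    rw [← integral_sub (hmi W) (hmi V)]
    refine integral_congr_ae (Eventually.of_forall fun x => ?_)
    simp [hF, mul_sub]
  linarith

end equil

theorem abs_main [Nonempty X] {T0 : C(X, ℝ) →ₗ[ℝ] C(X, ℝ)} (h0 : ∀ f : C(X, ℝ), 0 ≤ f → 0 ≤ T0 f)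
    (h1 : T0 1 = 1) (Q : C(X, ℝ) → ℝ)
    (hQ : ∀ W u, Tendsto (fun k : ℕ => (k : ℝ)⁻¹ * Real.log ((TW T0 W ^ k) 1 u)) atTop (𝓝 (Q W)))
    (V : C(X, ℝ)) {a q C : ℝ} (HP : PF (TW T0 V) a q C) :
    ∃ lam : ℝ, 0 < lam ∧ ∃ h : C(X, ℝ), ∃ μ : Measure X, IsProbabilityMeasure μ ∧
      (∀ x, 0 < h x) ∧ TW T0 V h = lam • h ∧
      (∀ f : C(X, ℝ), ∫ x, TW T0 V f x ∂μ = lam * ∫ x, f x ∂μ) ∧ ∫ x, h x ∂μ = 1 ∧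
      (∀ W : C(X, ℝ), ∫ x, h x * W x ∂μ - Q W ≤ ∫ x, h x * V x ∂μ - Q V) ∧
      ∀ σ : Measure X, IsProbabilityMeasure σ →
        (∀ W : C(X, ℝ), ∫ x, W x ∂σ - Q W ≤ ∫ x, V x ∂σ - Q V) →
        σ = μ.withDensity fun x => ENNReal.ofReal (h x) := by
  obtain ⟨lam, c, L, h₁, hl, hc, hL, hk, hch, hLh, hT₁⟩ := HP.eigen
  obtain ⟨μ, hμp, hμ⟩ := exists_mu HP.pos hl hc hk hch hT₁
  have hI : 0 < ∫ x, h₁ x ∂μ := by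
    have : ∫ x, c ∂μ ≤ ∫ x, h₁ x ∂μ := integral_mono (integrable_const _) (cint μ _) hch
    simp at this
    linarith
  set I := ∫ x, h₁ x ∂μ with hId
  let h : C(X, ℝ) := I⁻¹ • h₁
  have hhe : ∀ x, h x = I⁻¹ * h₁ x := fun x => rfl
  have hh : ∀ x, 0 < h x := fun x => by
    rw [hhe]; have := hc.trans_le (hch x); positivity
  have hT : TW T0 V h = lam • h := by simp only [h, map_smul, hT₁]; rw [smul_comm]
  have hμ1 : ∫ x, h x ∂μ = 1 := by
    simp_rw [hhe]
    rw [integral_const_mul, ← hId, inv_mul_cancel₀ hI.ne']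
  refine ⟨lam, hl, h, μ, hμp, hh, hT, hμ, hμ1, ?_, ?_⟩
  · exact fun W => equil_of_eig h0 h1 Q hQ V h lam hl hh hT μ hμ hμ1 W
  · intro σ hσp hσ
    have st : ∀ f : C(X, ℝ), ∫ x, f x ∂σ = ∫ x, (lam⁻¹ * (h x)⁻¹) * TW T0 V (h * f) x ∂σ := by
      intro f
      refine le_antisymm (stat_of_equil h0 h1 Q hQ V h lam hl hh hT σ hσ f) ?_
      have := stat_of_equil h0 h1 Q hQ V h lam hl hh hT σ hσ (-f)
      simp only [mul_neg, map_neg, ContinuousMap.neg_apply, integral_neg] at this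
      linarith
    have hinv : ∀ x, 0 < invC h hh x := fun x => inv_pos.2 (hh x)
    let ν := σ.withDensity fun x => ENNReal.ofReal (invC h hh x)
    have : IsFiniteMeasure ν := fin_wd σ _
    have hν : ∀ f : C(X, ℝ), ∫ x, TW T0 V f x ∂ν = lam * ∫ x, f x ∂ν := by
      intro f
      rw [int_wd _ _ hinv, int_wd _ _ hinv]
      have := st (invC h hh * f)
      have e : h * (invC h hh * f) = f := by
        ext x
        have := (hh x).ne'
        simp only [ContinuousMap.mul_apply, invC, ContinuousMap.coe_mk]
        field_simp
      rw [e] at this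
      simp only [ContinuousMap.mul_apply] at this
      rw [this, ← integral_const_mul]
      refine integral_congr_ae (Eventually.of_forall fun x => ?_)
      simp only [invC, ContinuousMap.coe_mk]
      field_simp
    have hν1 : ∫ x, h x ∂ν = 1 := by
      rw [int_wd _ _ hinv]
      have : ∀ x, invC h hh x * h x = 1 := fun x => inv_mul_cancel₀ (hh x).ne'
      simp [this]
    have hLh' : LipR (I⁻¹ * L) h := fun x y => by
      rw [hhe, hhe, ← mul_sub, abs_mul, abs_of_pos (inv_pos.2 hI), mul_assoc]
      exact mul_le_mul_of_nonneg_left (hLh x y) (inv_pos.2 hI).le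
    obtain ⟨c', hc', hch'⟩ := exists_min_pos h hh
    have hk' : ∀ k, ‖(TW T0 V ^ k) 1‖ ≤ lam ^ k / min c c' := fun k =>
      (hk k).trans (by gcongr; exact min_le_left _ _)
    have hμν : μ = ν := meas_ext μ ν fun f Lf hLf hf =>
      uniq_le HP hl (lt_min hc hc') (by positivity) hLh' hk' (fun x => (min_le_right _ _).trans (hch' x))
        hT μ ν hμ hν hμ1 hν1 f Lf hLf hf
    have : IsFiniteMeasure (μ.withDensity fun x => ENNReal.ofReal (h x)) := fin_wd μ _
    refine meas_ext _ _ fun f Lf hLf hf => le_of_eq ?_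
    rw [int_wd _ _ hh, hμν, int_wd _ _ hinv]
    refine integral_congr_ae (Eventually.of_forall fun x => ?_)
    have := (hh x).ne'
    simp only [invC, ContinuousMap.coe_mk]
    field_simp

end PF



set_option linter.unusedSectionVars false

namespace PG

section topo
variable {H : Type} [NormedAddCommGroup H] [InnerProductSpace ℝ H] [CompleteSpace H]

/-- the projection as a continuous linear map -/
def pN (e : HilbertBasis ℕ ℝ H) (N : ℕ) : H →L[ℝ] H :=
  ∑ j ∈ Finset.range N, (innerSL ℝ (e j)).smulRight (e j)

theorem projB_eq (e : HilbertBasis ℕ ℝ H) (N : ℕ) (u : H) : projB e N u = pN e N u := by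
  simp [projB, pN, HilbertBasis.repr_apply_apply]

theorem projB_congr (e : HilbertBasis ℕ ℝ H) (N : ℕ) (u v : H)
    (h : ∀ j < N, e.repr u j = e.repr v j) : projB e N u = projB e N v := by
  apply Finset.sum_congr rfl
  intro j hj
  rw [h j (Finset.mem_range.1 hj)]

theorem repr_pN (e : HilbertBasis ℕ ℝ H) (N : ℕ) (u : H) (j : ℕ) (hj : j < N) :
    e.repr (pN e N u) j = e.repr u j := by
  have ho := orthonormal_iff_ite.1 e.orthonormal
  rw [← projB_eq, HilbertBasis.repr_apply_apply, projB, inner_sum]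
  simp only [inner_smul_right, ho]
  simp [hj]

theorem attain_subset_dom (S : H → H) (K B : Set H) (n : ℕ) : attain S K B n ⊆ attainDom S K B :=
  (Set.subset_iUnion _ n).trans subset_closure

theorem zero_mem_dom (S : H → H) (K : Set H) : (0 : H) ∈ attainDom S K {0} :=
  attain_subset_dom S K {0} 0 rfl

theorem dom_inv {S : H → H} (hS : Continuous S) {K : Set H} {u y : H}
    (hu : u ∈ attainDom S K {0}) (hy : y ∈ K) : S u + y ∈ attainDom S K {0} := by
  refine map_mem_closure (f := fun v => S v + y) (by fun_prop) hu ?_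
  intro v hv
  obtain ⟨n, hn⟩ := Set.mem_iUnion.1 hv
  exact Set.mem_iUnion.2 ⟨n + 1, Set.add_mem_add ⟨v, hn, rfl⟩ hy⟩

theorem attain_compact {S : H → H} (hS : Continuous S) {K : Set H} (hK : IsCompact K) :
    ∀ n, IsCompact (attain S K {0} n)
  | 0 => isCompact_singleton
  | n + 1 => ((attain_compact hS hK n).image hS).add hK

theorem tb_image {S : H → H} (hA : CondA S) {e : HilbertBasis ℕ ℝ H} (hC : CondC S e) {R : ℝ}
    (hR : 0 < R) : TotallyBounded (S '' Metric.closedBall 0 R) := by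
  obtain ⟨C, hC0, a, -, -, n₀, -, hLip, -⟩ := hA.2 R (R / 2) (by linarith) (by linarith)
  obtain ⟨γ, hγ0, -, hγ, hγS⟩ := hC R hR
  have h0 : (0 : H) ∈ Metric.closedBall (0 : H) R := by simp [hR.le]
  rw [Metric.totallyBounded_iff]
  intro ε hε
  obtain ⟨N, hN⟩ := ((hγ.mul_const R).eventually (gt_mem_nhds (show 0 * R < ε / 2 by simpa))).exists
  set M := C * R + ‖S 0‖
  set A : Set H := (fun c : Fin N → ℝ => ∑ i, c i • (e i : H) + (S 0 - projB e N (S 0))) ''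
    (Set.univ.pi fun _ => Set.Icc (-M) M)
  have hAc : IsCompact A := (isCompact_univ_pi fun _ => isCompact_Icc).image (by fun_prop)
  obtain ⟨t, ht, htA⟩ := Metric.totallyBounded_iff.1 hAc.totallyBounded (ε / 2) (by linarith)
  refine ⟨t, ht, ?_⟩
  rintro _ ⟨u, hu, rfl⟩
  have hSu : ‖S u‖ ≤ M := by
    have h1 := hLip u hu 0 h0
    have h2 : ‖u‖ ≤ R := by simpa using hu
    rw [sub_zero] at h1
    have h3 : C * ‖u‖ ≤ C * R := by gcongr
    have := norm_add_le (S u - S 0) (S 0)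
    rw [sub_add_cancel] at this
    simp only [M]; linarith
  set z := projB e N (S u) + (S 0 - projB e N (S 0)) with hz
  have hzA : z ∈ A := by
    refine ⟨fun i => e.repr (S u) i, ?_, ?_⟩
    · intro i _
      rw [Set.mem_Icc, ← abs_le]
      change |e.repr (S u) i| ≤ M
      rw [HilbertBasis.repr_apply_apply]
      refine (abs_real_inner_le_norm _ _).trans ?_
      rw [e.orthonormal.1 i, one_mul]; exact hSu
    · simp only [hz, projB, Finset.sum_range]
  obtain ⟨y, hy, hzy⟩ := Set.mem_iUnion₂.1 (htA hzA)
  refine Set.mem_iUnion₂.2 ⟨y, hy, ?_⟩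
  rw [Metric.mem_ball] at hzy ⊢
  have h1 : dist (S u) z < ε / 2 := by
    rw [dist_eq_norm]
    have e1 : S u - z = S u - S 0 - projB e N (S u - S 0) := by
      simp only [hz, projB_eq, map_sub]; abel
    rw [e1]
    refine (hγS N u hu 0 h0).trans_lt (lt_of_le_of_lt ?_ hN)
    have h2 : ‖u‖ ≤ R := by simpa using hu
    rw [sub_zero]
    have := (hγ0 N).le
    gcongr
  calc dist (S u) y ≤ dist (S u) z + dist z y := dist_triangle _ _ _
    _ < ε := by linarith

theorem dom_bdd {S : H → H} {K : Set H} (hS : Continuous S) (hK : IsCompact K)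
    (hB : CondB S K) : ∃ R : ℝ, 0 < R ∧ ∀ n, attain S K {0} n ⊆ Metric.closedBall 0 R := by
  obtain ⟨ρ, hρ, k₀, -, hk⟩ := hB
  have h1 : Bornology.IsBounded (⋃ n ∈ Finset.range (k₀ 0), attain S K {0} n) := by
    rw [Bornology.isBounded_biUnion_finset]
    exact fun n _ => (attain_compact hS hK n).isBounded
  obtain ⟨R, hR⟩ := h1.subset_closedBall 0
  refine ⟨max R ρ, lt_max_of_lt_right hρ, fun n => ?_⟩
  by_cases hn : n < k₀ 0
  · exact (Set.subset_biUnion_of_mem (u := fun n => attain S K {0} n)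
      (show n ∈ (Finset.range (k₀ 0) : Set ℕ) by simpa using hn)).trans
      (hR.trans (Metric.closedBall_subset_closedBall (le_max_left _ _)))
  · have := hk 0 le_rfl n (not_lt.1 hn)
    rw [Metric.closedBall_zero] at this
    exact this.trans (Metric.closedBall_subset_closedBall (le_max_right _ _))

theorem dom_compact {S : H → H} {K : Set H} (hK : IsCompact K) (hA : CondA S)
    (hB : CondB S K) {e : HilbertBasis ℕ ℝ H} (hC : CondC S e) :
    IsCompact (attainDom S K {0}) := by
  obtain ⟨R, hR, hb⟩ := dom_bdd hA.1.continuous hK hB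
  have htb : TotallyBounded (⋃ n, attain S K {0} n) := by
    have : TotallyBounded ({0} ∪ (S '' Metric.closedBall 0 R + K)) := by
      refine (Set.finite_singleton _).totallyBounded.union ?_
      have h1 := (tb_image hA hC hR).closure.isCompact_of_isClosed isClosed_closure
      exact (h1.add hK).totallyBounded.subset (Set.add_subset_add_right subset_closure)
    refine this.subset (Set.iUnion_subset fun n => ?_)
    cases n with
    | zero => exact Set.subset_union_left
    | succ n =>
      exact (Set.add_subset_add_right (Set.image_mono (hb n))).trans Set.subset_union_right
  exact htb.closure.isCompact_of_isClosed isClosed_closure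

theorem dom_sub_ball {S : H → H} {K : Set H} (hS : Continuous S) (hK : IsCompact K)
    (hB : CondB S K) : ∃ R : ℝ, 0 < R ∧ attainDom S K {0} ⊆ Metric.closedBall 0 R := by
  obtain ⟨R, hR, hb⟩ := dom_bdd hS hK hB
  exact ⟨R, hR, closure_minimal (Set.iUnion_subset hb) Metric.isClosed_closedBall⟩

/-- iterated contraction: `S^n u → 0` uniformly on the domain -/
theorem unif_contr {S : H → H} (hA : CondA S) {R r : ℝ} (hr : 0 < r) :
    ∃ n, ∀ u ∈ Metric.closedBall (0 : H) R, ‖S^[n] u‖ ≤ r := by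
  obtain ⟨C, hC0, a, ha0, ha1, n₀, -, -, hn⟩ := hA.2 (max R r + 1) r hr
    (by have := le_max_right R r; linarith)
  set R' := max R r + 1
  have hR' : 0 < R' := by have := le_max_right R r; simp only [R']; linarith
  have key : ∀ j : ℕ, ∀ u ∈ Metric.closedBall (0 : H) R', ‖S^[n₀ * j] u‖ ≤ max (a ^ j * R') r := by
    intro j
    induction j with
    | zero => intro u hu; simp at hu ⊢; exact Or.inl hu
    | succ j ih =>
      intro u hu
      have h1 := ih u hu
      have h2 : max (a ^ j * R') r ≤ R' := by
        apply max_le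
        · exact mul_le_of_le_one_left hR'.le (pow_le_one₀ ha0.le ha1.le)
        · have := le_max_right R r; simp only [R']; linarith
      have h3 := hn (S^[n₀ * j] u) (by simpa using h1.trans h2) n₀ le_rfl
      rw [← Function.iterate_add_apply] at h3
      rw [show n₀ * (j + 1) = n₀ + n₀ * j by ring]
      refine h3.trans (max_le ?_ (le_max_right _ _))
      refine (mul_le_mul_of_nonneg_left h1 ha0.le).trans ?_
      rw [mul_max_of_nonneg _ _ ha0.le]
      refine max_le_max ?_ ?_
      · rw [pow_succ]; exact le_of_eq (by ring)
      · exact mul_le_of_le_one_left hr.le ha1.le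
  have hl : Tendsto (fun j : ℕ => a ^ j * R') atTop (𝓝 (0 * R')) :=
    (tendsto_pow_atTop_nhds_zero_of_lt_one ha0.le ha1).mul_const R'
  obtain ⟨j, hj⟩ := (hl.eventually (gt_mem_nhds (show 0 * R' < r by simpa))).exists
  refine ⟨n₀ * j, fun u hu => (key j u ?_).trans (max_le hj.le le_rfl)⟩
  refine Metric.closedBall_subset_closedBall ?_ hu
  have := le_max_left R r; simp only [R']; linarith

end topo

end PG



set_option linter.unusedSectionVars false

namespace PG

theorem shift_real {p : ℝ → ℝ} {L : ℝ≥0} (hp : LipschitzWith L p)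
    (hs : Function.support p ⊆ Set.Icc (-1 : ℝ) 1) (g : ℝ → ℝ) (hg : Measurable g) (B : ℝ)
    (hB : ∀ x, |g x| ≤ B) (s : ℝ) :
    |∫ x, g (x + s) ∂((volume : Measure ℝ).withDensity fun x => ENNReal.ofReal (p x)) -
      ∫ x, g x ∂((volume : Measure ℝ).withDensity fun x => ENNReal.ofReal (p x))|
      ≤ 4 * L * |s| * B := by
  have hB0 : 0 ≤ B := (abs_nonneg _).trans (hB 0)
  set d : ℝ → ℝ := fun x => max (p x) 0 with hd
  have hdc : Continuous d := hp.continuous.max continuous_const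
  have hdz : ∀ x, x ∉ Set.Icc (-1 : ℝ) 1 → d x = 0 := by
    intro x hx
    have : p x = 0 := by
      by_contra h
      exact hx (hs h)
    simp [hd, this]
  have hdl : ∀ x y, |d x - d y| ≤ L * |x - y| := by
    intro x y
    have h1 := hp.dist_le_mul x y
    rw [Real.dist_eq, Real.dist_eq] at h1
    exact (abs_max_sub_max_le_abs _ _ _).trans h1
  have hdi : Integrable d := by
    refine hdc.integrable_of_hasCompactSupport (HasCompactSupport.intro isCompact_Icc hdz)
  have hI : ∀ f : ℝ → ℝ, ∫ x, f x ∂((volume : Measure ℝ).withDensity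
      fun x => ENNReal.ofReal (p x)) = ∫ x, f x * d x := by
    intro f
    rw [integral_withDensity_eq_integral_toReal_smul (by
      exact hp.continuous.measurable.ennreal_ofReal) (by simp)]
    apply integral_congr_ae
    filter_upwards with x
    rw [ENNReal.toReal_ofReal', smul_eq_mul, mul_comm]
  have e1 : ∫ x, g (x + s) * d x = ∫ x, g x * d (x - s) := by
    rw [← integral_add_right_eq_self (fun x => g x * d (x - s)) s]
    simp
  have i1 : Integrable (fun x => g x * d (x - s)) :=
    (hdi.comp_sub_right s).bdd_mul hg.aestronglyMeasurable (c := B)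
      (Eventually.of_forall fun x => hB x)
  have i2 : Integrable (fun x => g x * d x) :=
    hdi.bdd_mul hg.aestronglyMeasurable (c := B) (Eventually.of_forall fun x => hB x)
  rw [hI, hI, e1, ← integral_sub i1 i2]
  set A : Set ℝ := Set.Icc (-1) 1 ∪ Set.Icc (-1 + s) (1 + s)
  have e2 : ∫ x, (g x * d (x - s) - g x * d x) = ∫ x in A, (g x * d (x - s) - g x * d x) := by
    symm
    apply setIntegral_eq_integral_of_forall_compl_eq_zero
    intro x hx
    simp only [A, Set.mem_union, not_or] at hx
    rw [hdz x hx.1, hdz (x - s) (fun h => hx.2 ⟨by linarith [h.1], by linarith [h.2]⟩)]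
    simp
  rw [e2]
  have hAv : volume A ≤ 4 := by
    refine (measure_union_le _ _).trans ?_
    rw [Real.volume_Icc, Real.volume_Icc, ← ENNReal.ofReal_add (by norm_num) (by linarith)]
    exact ENNReal.ofReal_le_of_le_toReal (by norm_num)
  have hAr : volume.real A ≤ 4 := by
    have := ENNReal.toReal_mono (by simp) hAv
    rw [Measure.real]; simpa using this
  have h3 := norm_setIntegral_le_of_norm_le_const (μ := volume) (s := A)
    (f := fun x => g x * d (x - s) - g x * d x) (C := B * (L * |s|)) (hAv.trans_lt (by simp))
    (fun x _ => by
      rw [← mul_sub, norm_mul]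
      have := hdl (x - s) x
      rw [show x - s - x = -s by ring, abs_neg] at this
      exact mul_le_mul (hB x) this (norm_nonneg _) hB0)
  rw [Real.norm_eq_abs] at h3
  refine h3.trans ?_
  have : B * (L * |s|) * volume.real A ≤ B * (L * |s|) * 4 := by gcongr
  linarith

section noise
variable {H : Type} [NormedAddCommGroup H] [InnerProductSpace ℝ H] [CompleteSpace H]
    [SecondCountableTopology H] [MeasurableSpace H] [BorelSpace H]
    {Ω : Type}

theorem supp_ae (ν : Measure H) : ∀ᵐ y ∂ν, y ∈ msupp ν := by
  have : msupp ν = ν.support := by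
    ext x
    rw [Measure.mem_support_iff_forall]; rfl
  rw [this]
  exact Measure.support_mem_ae

theorem meas_hasSum (m : MeasurableSpace Ω) (e : HilbertBasis ℕ ℝ H) (c : ℕ → Ω → ℝ)
    (hc : ∀ j, Measurable (c j)) (z : Ω → H)
    (hz : ∀ ω, HasSum (fun j => c j ω • (e j : H)) (z ω)) : Measurable z := by
  refine measurable_of_tendsto_metrizable (f := fun n ω => ∑ j ∈ Finset.range n, c j ω • (e j : H))
    (fun n => ?_) ?_
  · exact Finset.measurable_sum _ fun j _ => (hc j).smul_const _
  · rw [tendsto_pi_nhds]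
    exact fun ω => (hz ω).tendsto_sum_nat

variable [mΩ : MeasurableSpace Ω] {P : Measure Ω} [IsProbabilityMeasure P]
    {e : HilbertBasis ℕ ℝ H} {η : ℕ → Ω → H}
    {b : ℕ → ℝ} {ξ : ℕ → ℕ → Ω → ℝ} {p : ℕ → ℝ → ℝ}

theorem D_iIndep (hD : CondD P e η b ξ p) :
    iIndep (fun jk : ℕ × ℕ => MeasurableSpace.comap (ξ jk.1 jk.2) inferInstance) P := by
  exact hD.2.2.2.2.1.iIndep

theorem D_le (hD : CondD P e η b ξ p) (jk : ℕ × ℕ) :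
    MeasurableSpace.comap (ξ jk.1 jk.2) inferInstance ≤ mΩ :=
  (hD.2.2.2.1 jk.1 jk.2).comap_le

/-- the sigma algebra generated by a set of coordinates -/
@[reducible] def sig (ξ : ℕ → ℕ → Ω → ℝ) (A : Set (ℕ × ℕ)) : MeasurableSpace Ω :=
  ⨆ jk ∈ A, MeasurableSpace.comap (ξ jk.1 jk.2) inferInstance

theorem sig_meas (ξ : ℕ → ℕ → Ω → ℝ) (A : Set (ℕ × ℕ)) (j k : ℕ) (h : (j, k) ∈ A) :
    Measurable[sig ξ A] (ξ j k) := by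
  refine Measurable.mono (comap_measurable (ξ j k)) ?_ le_rfl
  exact le_iSup₂_of_le (f := fun jk (_ : jk ∈ A) =>
      MeasurableSpace.comap (ξ jk.1 jk.2) inferInstance) (j, k) h le_rfl

theorem sig_le (hD : CondD P e η b ξ p) (A : Set (ℕ × ℕ)) : sig ξ A ≤ mΩ :=
  iSup₂_le fun jk _ => D_le hD jk

theorem sig_mono (ξ : ℕ → ℕ → Ω → ℝ) {A B : Set (ℕ × ℕ)} (h : A ⊆ B) : sig ξ A ≤ sig ξ B :=
  biSup_mono h

theorem sig_indep (hD : CondD P e η b ξ p) {A B : Set (ℕ × ℕ)} (h : Disjoint A B)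
    {α β : Type*} [MeasurableSpace α] [MeasurableSpace β] {f : Ω → α} {g : Ω → β}
    (hf : Measurable[sig ξ A] f) (hg : Measurable[sig ξ B] g) : IndepFun f g P := by
  have h1 := indep_iSup_of_disjoint (D_le hD) (D_iIndep hD) h
  rw [IndepFun_iff_Indep]
  exact indep_of_indep_of_le_left (indep_of_indep_of_le_right h1 hg.comap_le) hf.comap_le

theorem eta_meas_sig (hD : CondD P e η b ξ p) (k : ℕ) (A : Set (ℕ × ℕ)) (hA : ∀ j, (j, k) ∈ A) :
    Measurable[sig ξ A] (η k) :=
  meas_hasSum (sig ξ A) e (fun j ω => b j * ξ j k ω)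
    (fun j => (sig_meas ξ A j k (hA j)).const_mul _) _ (hD.2.2.1 k)

theorem indep_int {α β : Type*} [MeasurableSpace α] [MeasurableSpace β] {f : Ω → α} {g : Ω → β}
    (hf : Measurable f) (hg : Measurable g) (hfg : IndepFun f g P) (F : α → β → ℝ)
    (hF : Measurable (Function.uncurry F)) (hi : Integrable (fun ω => F (f ω) (g ω)) P) :
    ∫ ω, F (f ω) (g ω) ∂P = ∫ x, ∫ y, F x y ∂(P.map g) ∂(P.map f) := by
  have h1 := (indepFun_iff_map_prod_eq_prod_map_map hf.aemeasurable hg.aemeasurable).1 hfg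
  have := Measure.isProbabilityMeasure_map (μ := P) hf.aemeasurable
  have := Measure.isProbabilityMeasure_map (μ := P) hg.aemeasurable
  have h2 : Integrable (Function.uncurry F) ((P.map f).prod (P.map g)) := by
    rw [← h1, integrable_map_measure hF.aestronglyMeasurable (hf.prodMk hg).aemeasurable]
    exact hi
  have h3 := integral_prod _ h2
  rw [← h1, integral_map (hf.prodMk hg).aemeasurable hF.aestronglyMeasurable] at h3
  exact h3

theorem bdd_int {μ : Measure Ω} [IsFiniteMeasure μ] {f : Ω → ℝ} (hf : Measurable f) {B : ℝ}
    (hB : ∀ ω, |f ω| ≤ B) : Integrable f μ :=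
  Integrable.of_bound hf.aestronglyMeasurable B (Eventually.of_forall hB)

theorem shift_one (hD : CondD P e η b ξ p) (hb : ∀ j, b j ≠ 0) (hηm : Measurable (η 1)) (j : ℕ) :
    ∃ C : ℝ, 0 ≤ C ∧ ∀ (g : H → ℝ) (B : ℝ), Measurable g → (∀ x, |g x| ≤ B) → ∀ t : ℝ,
      |∫ ω, g (η 1 ω + t • (e j : H)) ∂P - ∫ ω, g (η 1 ω) ∂P| ≤ C * |t| * B := by
  obtain ⟨L, hL⟩ := hD.2.2.2.2.2.2.1 j
  have hb0 : 0 < b j := lt_of_le_of_ne (hD.1 j) (hb j).symm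
  refine ⟨4 * L / b j, by positivity, fun g B hg hB t => ?_⟩
  set ζ : Ω → H := fun ω => η 1 ω - (b j * ξ j 1 ω) • (e j : H) with hζ
  have hξm := hD.2.2.2.1 j 1
  have hζm : Measurable ζ := hηm.sub ((hξm.const_mul _).smul_const _)
  have hζs : Measurable[sig ξ {jk | jk ≠ (j, 1)}] ζ := by
    refine meas_hasSum (sig ξ _) e (fun i ω => if i = j then 0 else b i * ξ i 1 ω) ?_ _ ?_
    · intro i
      by_cases h : i = j
      · simp only [h, if_true]; exact measurable_const
      · simp only [h, if_false]
        exact (sig_meas ξ _ i 1 (by simp [h])).const_mul _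
    · intro ω
      have h1 := (hD.2.2.1 1 ω).sub (hasSum_ite_eq j ((b j * ξ j 1 ω) • (e j : H)))
      refine h1.congr_fun fun i => ?_
      by_cases h : i = j
      · subst h; simp
      · simp [h]
  have hind : IndepFun ζ (ξ j 1) P := sig_indep hD (A := {jk | jk ≠ (j, 1)}) (B := {(j, 1)})
    (by rw [Set.disjoint_singleton_right]; simp) hζs (sig_meas ξ _ j 1 rfl)
  set G : H → ℝ → ℝ := fun z x => g ((b j * x) • (e j : H) + z) with hG
  have hGm : Measurable (Function.uncurry G) := by
    apply hg.comp
    exact ((measurable_snd.const_mul _).smul_const _).add measurable_fst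
  have hGm' : Measurable (Function.uncurry fun z x => G z (x + t / b j)) := by
    apply hg.comp
    exact (((measurable_snd.add_const _).const_mul _).smul_const _).add measurable_fst
  have e1 : ∀ ω, g (η 1 ω) = G (ζ ω) (ξ j 1 ω) := by
    intro ω; simp [hG, hζ]
  have e2 : ∀ ω, g (η 1 ω + t • (e j : H)) = G (ζ ω) (ξ j 1 ω + t / b j) := by
    intro ω
    simp only [hG, hζ, mul_add, mul_div_cancel₀ t hb0.ne', add_smul]
    congr 1; abel
  simp_rw [e1, e2]
  rw [indep_int hζm hξm hind (fun z x => G z (x + t / b j)) hGm'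
      (bdd_int (hGm'.comp (hζm.prodMk hξm)) fun ω => hB _),
    indep_int hζm hξm hind G hGm (bdd_int (hGm.comp (hζm.prodMk hξm)) fun ω => hB _)]
  have := Measure.isProbabilityMeasure_map (μ := P) hζm.aemeasurable
  have := Measure.isProbabilityMeasure_map (μ := P) hξm.aemeasurable
  have hbd : ∀ G' : H → ℝ → ℝ, Measurable (Function.uncurry G') → (∀ z x, |G' z x| ≤ B) →
      Integrable (fun z => ∫ x, G' z x ∂(P.map (ξ j 1))) (P.map ζ) := by
    intro G' hm hB'
    refine Integrable.of_bound hm.stronglyMeasurable.integral_prod_right.aestronglyMeasurable B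
      (Eventually.of_forall fun z => ?_)
    refine (norm_integral_le_of_norm_le_const (C := B) (Eventually.of_forall (hB' z))).trans ?_
    simp
  rw [← integral_sub (hbd _ hGm' fun z x => hB _) (hbd _ hGm fun z x => hB _)]
  suffices hz : ∀ z, ‖∫ x, G z (x + t / b j) ∂(P.map (ξ j 1)) - ∫ x, G z x ∂(P.map (ξ j 1))‖
      ≤ 4 * L / b j * |t| * B by
    have h6 := norm_integral_le_of_norm_le_const (μ := P.map ζ) (Eventually.of_forall hz)
    rwa [probReal_univ, mul_one, Real.norm_eq_abs] at h6
  intro z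
  have h5 := shift_real hL (hD.2.2.2.2.2.2.2.2 j) (G z) (hGm.comp (measurable_const.prodMk measurable_id))
    B (fun x => hB _) (t / b j)
  rw [hD.2.2.2.2.2.1 j 1, Real.norm_eq_abs]
  refine h5.trans (le_of_eq ?_)
  rw [abs_div, abs_of_pos hb0]; ring

theorem shift_N (hD : CondD P e η b ξ p) (hb : ∀ j, b j ≠ 0) (hηm : Measurable (η 1)) (N : ℕ) :
    ∃ C : ℝ, 0 ≤ C ∧ ∀ (g : H → ℝ) (B : ℝ), Measurable g → (∀ x, |g x| ≤ B) → ∀ v : H,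
      |∫ ω, g (η 1 ω + projB e N v) ∂P - ∫ ω, g (η 1 ω) ∂P| ≤ C * ‖v‖ * B := by
  induction N with
  | zero =>
    refine ⟨0, le_rfl, fun g B hg hB v => ?_⟩
    simp [projB]
  | succ N ih =>
    obtain ⟨C, hC, h⟩ := ih
    obtain ⟨C', hC', h'⟩ := shift_one hD hb hηm N
    refine ⟨C + C', by positivity, fun g B hg hB v => ?_⟩
    have hB0 : 0 ≤ B := (abs_nonneg _).trans (hB 0)
    have h1 := h g B hg hB v
    have h2 := h' (fun y => g (y + projB e N v)) B (hg.comp (measurable_add_const _))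
      (fun x => hB _) (e.repr v N)
    have e1 : ∀ ω, g (η 1 ω + projB e (N + 1) v) =
        g (η 1 ω + e.repr v N • (e N : H) + projB e N v) := by
      intro ω
      rw [projB, Finset.sum_range_succ, projB]; congr 1; abel
    simp_rw [e1]
    have h3 : |e.repr v N| ≤ ‖v‖ := by
      rw [HilbertBasis.repr_apply_apply]
      refine (abs_real_inner_le_norm _ _).trans ?_
      rw [e.orthonormal.1 N, one_mul]
    have h4 : C' * |e.repr v N| * B ≤ C' * ‖v‖ * B := by gcongr
    have h5 := abs_sub_le (∫ ω, g (η 1 ω + e.repr v N • (e N : H) + projB e N v) ∂P)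
      (∫ ω, g (η 1 ω + projB e N v) ∂P) (∫ ω, g (η 1 ω) ∂P)
    have : (C + C') * ‖v‖ * B = C * ‖v‖ * B + C' * ‖v‖ * B := by ring
    linarith

theorem inner_eta (hD : CondD P e η b ξ p) (k i : ℕ) (ω : Ω) :
    inner ℝ (e i : H) (η k ω) = b i * ξ i k ω := by
  have h1 := (hD.2.2.1 k ω).mapL (innerSL ℝ (e i : H))
  have ho := orthonormal_iff_ite.1 e.orthonormal
  refine h1.unique ?_
  refine (hasSum_ite_eq i (b i * ξ i k ω)).congr_fun fun j => ?_
  simp only [innerSL_apply_apply, inner_smul_right, ho]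
  by_cases h : i = j
  · subst h; simp
  · simp [h, Ne.symm h]

theorem xi_pos (hD : CondD P e η b ξ p) (j k : ℕ) (U : Set ℝ) (hU : IsOpen U) (h0 : (0:ℝ) ∈ U) :
    0 < P (ξ j k ⁻¹' U) := by
  rw [← Measure.map_apply (hD.2.2.2.1 j k) hU.measurableSet, hD.2.2.2.2.2.1 j k]
  obtain ⟨L, hL⟩ := hD.2.2.2.2.2.2.1 j
  rw [pos_iff_ne_zero, Ne, withDensity_apply_eq_zero
    (by exact hL.continuous.measurable.ennreal_ofReal)]
  refine ne_of_gt (lt_of_lt_of_le ?_ (measure_mono (?_ : {x | 0 < p j x} ∩ U ⊆ _)))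
  · refine IsOpen.measure_pos _ ((isOpen_lt continuous_const hL.continuous).inter hU) ⟨0, ?_, h0⟩
    exact hD.2.2.2.2.2.2.2.1 j
  · rintro x ⟨hx, hx'⟩
    refine ⟨?_, hx'⟩
    simpa using hx

theorem xi_le (hD : CondD P e η b ξ p) (j k : ℕ) : ∀ᵐ ω ∂P, ξ j k ω ^ 2 ≤ 1 := by
  have : ∀ᵐ x ∂(P.map (ξ j k)), x ^ 2 ≤ 1 := by
    obtain ⟨L, hL⟩ := hD.2.2.2.2.2.2.1 j
    rw [hD.2.2.2.2.2.1 j k, ae_withDensity_iff (by exact hL.continuous.measurable.ennreal_ofReal)]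
    refine Eventually.of_forall fun x hx => ?_
    have : p j x ≠ 0 := fun h => hx (by simp [h])
    have := hD.2.2.2.2.2.2.2.2 j this
    rw [sq_le_one_iff_abs_le_one, abs_le]
    exact this
  exact ae_of_ae_map (hD.2.2.2.1 j k).aemeasurable this

theorem zero_mem_supp (hD : CondD P e η b ξ p) (hηm : Measurable (η 1)) :
    (0 : H) ∈ msupp (P.map (η 1)) := by
  intro U hU
  obtain ⟨ε, hε, hεU⟩ := Metric.mem_nhds_iff.1 hU
  refine lt_of_lt_of_le ?_ (measure_mono hεU)
  rw [Measure.map_apply hηm Metric.isOpen_ball.measurableSet]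
  have hbs := hD.2.1
  set M := ∑' j, b j ^ 2
  have hM : 0 ≤ M := tsum_nonneg fun j => sq_nonneg _
  obtain ⟨N, hN⟩ := ((tendsto_sum_nat_add fun j => b j ^ 2).eventually
    (gt_mem_nhds (show 0 < ε ^ 2 / 2 by positivity))).exists
  set δ := ε ^ 2 / (2 * (M + 1)) with hδ
  have hδ0 : 0 < δ := by positivity
  have hδM : δ * M ≤ ε ^ 2 / 2 := by
    rw [hδ, div_mul_eq_mul_div, div_le_div_iff₀ (by positivity) (by positivity)]
    nlinarith [sq_nonneg ε]
  have hpos : 0 < P (⋂ i ∈ Finset.range N, ξ i 1 ⁻¹' {x | x ^ 2 < δ}) := by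
    have hopen : IsOpen {x : ℝ | x ^ 2 < δ} := isOpen_lt (by fun_prop) continuous_const
    have hi : iIndepFun (fun i : ℕ => ξ i 1) P :=
      hD.2.2.2.2.1.precomp (g := fun i : ℕ => (i, 1)) (fun i j h => by simpa using h)
    rw [hi.measure_inter_preimage_eq_mul _ (fun i _ => hopen.measurableSet)]
    rw [pos_iff_ne_zero, Finset.prod_ne_zero_iff]
    exact fun i _ => (xi_pos hD i 1 _ hopen (by simpa using hδ0)).ne'
  have hae : ∀ᵐ ω ∂P, ∀ i, ξ i 1 ω ^ 2 ≤ 1 := ae_all_iff.2 fun i => xi_le hD i 1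
  refine lt_of_lt_of_le hpos (measure_mono_ae ?_)
  filter_upwards [hae] with ω hω hω2
  have hω2' : ∀ i < N, ξ i 1 ω ^ 2 < δ := by
    intro i hi
    have : ω ∈ (⋂ i ∈ Finset.range N, ξ i 1 ⁻¹' {x | x ^ 2 < δ}) := hω2
    simp only [Set.mem_iInter] at this
    exact this i (Finset.mem_range.2 hi)
  change η 1 ω ∈ Metric.ball 0 ε
  rw [mem_ball_zero_iff]
  have h1 := e.hasSum_inner_mul_inner (η 1 ω) (η 1 ω)
  simp only [real_inner_comm (e _ : H) (η 1 ω), inner_eta hD, real_inner_self_eq_norm_sq] at h1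
  have hsm := h1.summable
  have hsum := hsm.sum_add_tsum_nat_add N
  rw [h1.tsum_eq] at hsum
  have a1 : ∑ i ∈ Finset.range N, b i * ξ i 1 ω * (b i * ξ i 1 ω) ≤ δ * M := by
    calc _ ≤ ∑ i ∈ Finset.range N, δ * b i ^ 2 := by
          refine Finset.sum_le_sum fun i hi => ?_
          have := hω2' i (Finset.mem_range.1 hi)
          nlinarith [sq_nonneg (b i)]
      _ = δ * ∑ i ∈ Finset.range N, b i ^ 2 := by rw [Finset.mul_sum]
      _ ≤ δ * M := by
          gcongr
          exact hbs.sum_le_tsum _ fun i _ => sq_nonneg _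
  have a2 : ∑' i, b (i + N) * ξ (i + N) 1 ω * (b (i + N) * ξ (i + N) 1 ω) ≤
      ∑' i, b (i + N) ^ 2 := by
    refine Summable.tsum_le_tsum (fun i => ?_) ((summable_nat_add_iff N).2 hsm)
      ((summable_nat_add_iff N).2 hbs)
    have := hω (i + N)
    nlinarith [sq_nonneg (b (i + N))]
  have : ‖η 1 ω‖ ^ 2 < ε ^ 2 := by linarith
  exact lt_of_pow_lt_pow_left₀ 2 hε.le this

theorem eta_law (hD : CondD P e η b ξ p) (hηm : ∀ k, Measurable (η k)) (k : ℕ) :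
    P.map (η k) = P.map (η 1) := by
  have hv : ∀ k, P.map (fun ω (j : ℕ) => ξ j k ω) = Measure.infinitePi (fun j => P.map (ξ j 1)) := by
    intro k
    have hi : iIndepFun (fun i : ℕ => ξ i k) P :=
      hD.2.2.2.2.1.precomp (g := fun i : ℕ => (i, k)) (fun i j h => by simpa using h)
    rw [hi.map_fun_eq_infinitePi_map (fun j => hD.2.2.2.1 j k)]
    congr 1; funext j
    rw [hD.2.2.2.2.2.1 j k, hD.2.2.2.2.2.1 j 1]
  have := fun k => Measure.isProbabilityMeasure_map (μ := P) (hηm k).aemeasurable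
  have hvm : ∀ k, Measurable (fun ω (j : ℕ) => ξ j k ω) := fun k =>
    measurable_pi_lambda _ fun j => hD.2.2.2.1 j k
  have hlim : ∀ (f : H →ᵇ ℝ) k, Tendsto (fun n : ℕ => ∫ x : ℕ → ℝ,
      f (∑ j ∈ Finset.range n, (b j * x j) • (e j : H)) ∂(Measure.infinitePi (fun j => P.map (ξ j 1))))
      atTop (𝓝 (∫ ω, f (η k ω) ∂P)) := by
    intro f k
    have hm : ∀ n, Measurable fun x : ℕ → ℝ => f (∑ j ∈ Finset.range n, (b j * x j) • (e j : H)) := by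
      intro n
      apply f.continuous.measurable.comp
      exact Finset.measurable_sum _ fun j _ => ((measurable_pi_apply j).const_mul _).smul_const _
    simp_rw [← hv k, fun n => integral_map (hvm k).aemeasurable
      (hm n).aestronglyMeasurable (μ := P)]
    refine tendsto_integral_of_dominated_convergence (fun _ => ‖f‖) (fun n => ?_)
      (integrable_const _) (fun n => Eventually.of_forall fun ω => f.norm_coe_le_norm _)
      (Eventually.of_forall fun ω => ?_)
    · exact ((hm n).comp (hvm k)).aestronglyMeasurable
    · exact (f.continuous.tendsto _).comp (hD.2.2.1 k ω).tendsto_sum_nat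
  apply ext_of_forall_integral_eq_of_IsFiniteMeasure
  intro f
  rw [integral_map (hηm k).aemeasurable f.continuous.aestronglyMeasurable,
    integral_map (hηm 1).aemeasurable f.continuous.aestronglyMeasurable]
  exact tendsto_nhds_unique (hlim f k) (hlim f 1)

end noise
end PG



set_option linter.unusedSectionVars false

namespace PG

section op
variable {H : Type} [NormedAddCommGroup H] [InnerProductSpace ℝ H] [CompleteSpace H]
    [SecondCountableTopology H] [MeasurableSpace H] [BorelSpace H]

theorem exists_ext (D : Set H) [CompactSpace D] (f : C(D, ℝ)) :
    ∃ g : H →ᵇ ℝ, ∀ x : D, g x = f x := by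
  have hc : IsClosed D := (isCompact_iff_compactSpace.2 inferInstance).isClosed
  obtain ⟨g, -, hg⟩ := BoundedContinuousFunction.exists_extension_norm_eq_of_isClosedEmbedding
    (BoundedContinuousFunction.mkOfCompact f) (e := (Subtype.val : D → H)) hc.isClosedEmbedding_subtypeVal
  refine ⟨g, fun x => ?_⟩
  have := congrFun hg x
  exact this

/-- Tietze extension -/
def ext {D : Set H} [CompactSpace D] (f : C(D, ℝ)) : H →ᵇ ℝ := (exists_ext D f).choose

@[simp] theorem ext_apply {D : Set H} [CompactSpace D] (f : C(D, ℝ)) (x : D) : ext f x = f x :=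
  (exists_ext D f).choose_spec x

theorem ext_mem {D : Set H} [CompactSpace D] (f : C(D, ℝ)) {x : H} (hx : x ∈ D) :
    ext f x = f ⟨x, hx⟩ := ext_apply f ⟨x, hx⟩

/-- restriction -/
def res (D : Set H) (W : H →ᵇ ℝ) : C(D, ℝ) := ⟨fun x => W x, by fun_prop⟩

@[simp] theorem res_apply (D : Set H) (W : H →ᵇ ℝ) (x : D) : res D W x = W x := rfl

/-- the transition data -/
structure Sys (S : H → H) (K D : Set H) (ν : Measure H) : Prop where
  hS : Continuous S
  ae : ∀ᵐ y ∂ν, y ∈ K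
  inv : ∀ u ∈ D, ∀ y ∈ K, S u + y ∈ D

variable {S : H → H} {K D : Set H} [CompactSpace D] {ν : Measure H} [IsProbabilityMeasure ν]

theorem bint (g : H →ᵇ ℝ) (hS : Continuous S) (u : H) : Integrable (fun y => g (S u + y)) ν :=
  Integrable.of_bound (by fun_prop) ‖g‖ (Eventually.of_forall fun y => g.norm_coe_le_norm _)

theorem Sys.ae_eq (h : Sys S K D ν) {f g : H → ℝ} (hfg : ∀ x ∈ D, f x = g x) {u : H} (hu : u ∈ D) :
    ∫ y, f (S u + y) ∂ν = ∫ y, g (S u + y) ∂ν := by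
  apply integral_congr_ae
  filter_upwards [h.ae] with y hy
  exact hfg _ (h.inv u hu y hy)

/-- The Markov operator -/
def T0 (h : Sys S K D ν) : C(D, ℝ) →ₗ[ℝ] C(D, ℝ) where
  toFun f := ⟨fun u => ∫ y, ext f (S u + y) ∂ν, by
    have := h.hS
    refine continuous_of_dominated (bound := fun _ => ‖ext f‖) (fun u => (bint _ h.hS _).1)
      (fun u => Eventually.of_forall fun y => (ext f).norm_coe_le_norm _) (integrable_const _)
      (Eventually.of_forall fun y => by fun_prop)⟩
  map_add' f g := by
    ext u
    simp only [ContinuousMap.coe_mk, ContinuousMap.add_apply]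
    rw [← integral_add (bint _ h.hS _) (bint _ h.hS _)]
    exact h.ae_eq (f := ext (f + g)) (g := fun x => ext f x + ext g x)
      (fun x hx => by simp [ext_mem _ hx]) u.2
  map_smul' c f := by
    ext u
    simp only [ContinuousMap.coe_mk, ContinuousMap.smul_apply, RingHom.id_apply, smul_eq_mul]
    rw [← integral_const_mul]
    exact h.ae_eq (f := ext (c • f)) (g := fun x => c * ext f x)
      (fun x hx => by simp [ext_mem _ hx]) u.2

theorem T0_eq (h : Sys S K D ν) (f : C(D, ℝ)) (g : H → ℝ) (hg : ∀ x : D, g x = f x) (u : D) :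
    T0 h f u = ∫ y, g (S u + y) ∂ν :=
  h.ae_eq (f := ext f) (g := g) (fun x hx => by rw [ext_mem f hx, ← hg]) u.2

theorem T0_pos (h : Sys S K D ν) (f : C(D, ℝ)) (hf : 0 ≤ f) : 0 ≤ T0 h f := by
  intro u
  change 0 ≤ T0 h f u
  rw [T0_eq h f (fun x => max (ext f x) 0) (fun x => by simpa using hf x)]
  exact integral_nonneg fun y => le_max_right _ _

theorem T0_one (h : Sys S K D ν) : T0 h 1 = 1 := by
  ext u
  rw [T0_eq h 1 (fun _ => 1) (fun x => by simp)]
  simp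

theorem T_pos_at (h : Sys S K D ν) (hK : K = msupp ν) (V f : C(D, ℝ)) (hf : 0 ≤ f) (u : D)
    (y : H) (hy : y ∈ K) (hp : 0 < ext f (S u + y)) : 0 < PF.TW (T0 h) V f u := by
  rw [PF.TW_apply, T0_eq h _ (fun x => Real.exp (ext V x) * max (ext f x) 0) (fun x => by
    simpa using hf x)]
  have hc := h.hS
  have hcont : Continuous fun z => Real.exp (ext V (S u + z)) * max (ext f (S u + z)) 0 := by
    fun_prop
  rw [integral_pos_iff_support_of_nonneg]
  · rw [hK] at hy
    refine hy _ (hcont.isOpen_support.mem_nhds ?_)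
    rw [Function.mem_support, max_eq_left hp.le]
    exact (mul_pos (Real.exp_pos _) hp).ne'
  · exact fun z => mul_nonneg (Real.exp_pos _).le (le_max_right _ _)
  · refine Integrable.of_bound hcont.aestronglyMeasurable (Real.exp ‖ext V‖ * ‖ext f‖)
      (Eventually.of_forall fun z => ?_)
    rw [norm_mul, Real.norm_eq_abs, abs_of_pos (Real.exp_pos _)]
    have h1 : ext V (S u + z) ≤ ‖ext V‖ := (le_abs_self _).trans ((ext V).norm_coe_le_norm _)
    have h2 : ‖max (ext f (S u + z)) 0‖ ≤ ‖ext f‖ := by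
      rw [Real.norm_eq_abs, abs_of_nonneg (le_max_right _ _)]
      exact max_le ((le_abs_self _).trans ((ext f).norm_coe_le_norm _)) (norm_nonneg _)
    gcongr

theorem irr_attain {K : Set H} [CompactSpace (attainDom S K {0})]
    (h : Sys S K (attainDom S K {0}) ν) (hK : K = msupp ν) (V : C(attainDom S K {0}, ℝ)) (l : ℕ) :
    ∀ f : C(attainDom S K {0}, ℝ), 0 ≤ f → ∀ v ∈ attain S K {0} l, 0 < ext f v →
      0 < (PF.TW (T0 h) V ^ l) f ⟨0, zero_mem_dom S K⟩ := by
  induction l with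
  | zero =>
    intro f hf v hv hp
    rw [Set.mem_singleton_iff.1 hv, ext_mem f (zero_mem_dom S K)] at hp
    simpa using hp
  | succ l ih =>
    rintro f hf _ ⟨_, ⟨w, hw, rfl⟩, y, hy, rfl⟩ hp
    rw [pow_succ, Module.End.mul_apply]
    refine ih _ (PF.TW_pos (T0_pos h) V f hf) w hw ?_
    rw [ext_mem _ (attain_subset_dom S K {0} l hw)]
    exact T_pos_at h hK V f hf _ y hy hp

theorem irr_iter (h : Sys S K D ν) (hK : K = msupp ν) (h0 : (0 : H) ∈ K) (V f : C(D, ℝ)) (hf : 0 ≤ f)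
    (n : ℕ) : ∀ u : D, 0 < ext f (S^[n] u) → 0 < (PF.TW (T0 h) V ^ n) f u := by
  induction n with
  | zero => intro u hu; simpa using hu
  | succ n ih =>
    intro u hu
    have hSu : S u ∈ D := by simpa using h.inv u u.2 0 h0
    rw [pow_succ', Module.End.mul_apply]
    refine T_pos_at h hK V _ (PF.pow_pos (PF.TW_pos (T0_pos h) V) n f hf) u 0 h0 ?_
    rw [add_zero, ext_mem _ hSu]
    exact ih ⟨S u, hSu⟩ (by simpa using hu)

theorem irr_main {K : Set H} [CompactSpace (attainDom S K {0})]
    (h : Sys S K (attainDom S K {0}) ν) (hK : K = msupp ν) (h0 : (0 : H) ∈ K) (hA : CondA S)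
    (V : C(attainDom S K {0}, ℝ)) (f : C(attainDom S K {0}, ℝ)) (hf : 0 ≤ f) (hp : ∃ x, 0 < f x) :
    ∃ m, ∀ x, 0 < (PF.TW (T0 h) V ^ m) f x := by
  obtain ⟨x, hx⟩ := hp
  obtain ⟨v, hv1, hv2⟩ := mem_closure_iff.1 x.2 {z | 0 < ext f z}
    (isOpen_lt continuous_const (by fun_prop)) (by simpa using hx)
  obtain ⟨l, hl⟩ := Set.mem_iUnion.1 hv2
  have h1 := irr_attain h hK V l f hf v hl hv1
  set g := (PF.TW (T0 h) V ^ l) f with hg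
  have hg0 : 0 ≤ g := PF.pow_pos (PF.TW_pos (T0_pos h) V) l f hf
  have hgz : 0 < ext g 0 := by rw [ext_mem g (zero_mem_dom S K)]; exact h1
  obtain ⟨δ, hδ, hδg⟩ := Metric.mem_nhds_iff.1 ((isOpen_lt continuous_const
    (ext g).continuous).mem_nhds (show (0:H) ∈ {z | 0 < ext g z} from hgz))
  have hcomp : IsCompact (attainDom S K {0}) := isCompact_iff_compactSpace.2 inferInstance
  obtain ⟨R, hR⟩ := hcomp.isBounded.subset_closedBall 0
  obtain ⟨n, hn⟩ := unif_contr hA (R := R) (half_pos hδ)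
  refine ⟨n + l, fun u => ?_⟩
  rw [pow_add, Module.End.mul_apply]
  refine irr_iter h hK h0 V g hg0 n u (hδg ?_)
  rw [mem_ball_zero_iff]
  have := hn u (hR u.2)
  linarith

end op
end PG



set_option linter.unusedSectionVars false

namespace PG

section ly
variable {H : Type} [NormedAddCommGroup H] [InnerProductSpace ℝ H] [CompleteSpace H]
    [SecondCountableTopology H] [MeasurableSpace H] [BorelSpace H]
variable {S : H → H} {K D : Set H} [CompactSpace D] {ν : Measure H} [IsProbabilityMeasure ν]

/-- clipping -/
def clip (B x : ℝ) : ℝ := max (-B) (min B x)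

theorem clip_abs {B : ℝ} (hB : 0 ≤ B) (x : ℝ) : |clip B x| ≤ B := by
  rw [abs_le]
  exact ⟨le_max_left _ _, max_le (by linarith) (min_le_left _ _)⟩

theorem clip_eq {B x : ℝ} (h : |x| ≤ B) : clip B x = x := by
  rw [abs_le] at h
  rw [clip, min_eq_right h.2, max_eq_right h.1]

theorem clip_lip (B x y : ℝ) : |clip B x - clip B y| ≤ |x - y| := by
  unfold clip
  rw [max_comm, max_comm (-B)]
  refine (abs_max_sub_max_le_abs _ _ _).trans ?_
  rw [min_comm, min_comm B]
  have := abs_min_sub_min_le_max x B y B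
  simpa using this

theorem clip_cont (B : ℝ) : Continuous (clip B) := by unfold clip; fun_prop

theorem ly (h : Sys S K D ν) (e : HilbertBasis ℕ ℝ H) {N NV : ℕ} (hN : NV ≤ N) {Cs CL γ : ℝ}
    (hCs : 0 ≤ Cs)
    (hsh : ∀ (g : H → ℝ) (B : ℝ), Measurable g → (∀ x, |g x| ≤ B) → ∀ v : H,
      |∫ y, g (y + projB e N v) ∂ν - ∫ y, g y ∂ν| ≤ Cs * ‖v‖ * B)
    (hCL : ∀ u ∈ D, ∀ v ∈ D, ‖S u - S v‖ ≤ CL * ‖u - v‖)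
    (hγ : ∀ u ∈ D, ∀ v ∈ D, ‖(S u - S v) - projB e N (S u - S v)‖ ≤ γ * ‖u - v‖)
    (V : C(D, ℝ)) (F : H → ℝ) (hF : Continuous F) (hVF : ∀ u : D, V u = F (projB e NV u))
    (f : C(D, ℝ)) (L B : ℝ) (hL : 0 ≤ L) (hf : LipR L f) (hB : ∀ x, |f x| ≤ B) :
    LipR ((Real.exp ‖V‖ * γ) * L + (Real.exp ‖V‖ * Cs * CL) * B) (PF.TW (T0 h) V f) := by
  intro u u'
  have hB0 : 0 ≤ B := (abs_nonneg _).trans (hB u)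
  obtain ⟨f1, hf1, hf1e⟩ := LipschitzOnWith.extend_real (K := ⟨L, hL⟩) (f := ext f) (s := D)
    (LipschitzOnWith.of_dist_le_mul (fun x hx y hy => by
      rw [ext_mem f hx, ext_mem f hy, Real.dist_eq]
      exact hf _ _))
  set M := ‖V‖
  have hM0 : 0 ≤ M := norm_nonneg _
  set f2 : H → ℝ := fun x => clip B (f1 x) with hf2
  set V2 : H → ℝ := fun x => clip M (F (projB e NV x)) with hV2
  have hf2c : Continuous f2 := (clip_cont B).comp hf1.continuous
  have hV2c : Continuous V2 := by
    refine (clip_cont M).comp (hF.comp ?_)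
    have : projB e NV = fun x => pN e NV x := funext fun x => projB_eq e NV x
    rw [this]; fun_prop
  set G : H → ℝ := fun x => Real.exp (V2 x) * f2 x with hG
  have hGc : Continuous G := (Real.continuous_exp.comp hV2c).mul hf2c
  have hexp : ∀ x, |Real.exp (V2 x)| ≤ Real.exp M := fun x => by
    rw [abs_of_pos (Real.exp_pos _)]
    exact Real.exp_le_exp.2 ((le_abs_self _).trans (clip_abs hM0 _))
  have hGB : ∀ x, |G x| ≤ Real.exp M * B := fun x => by
    rw [hG, abs_mul]
    exact mul_le_mul (hexp x) (clip_abs hB0 _) (abs_nonneg _) (Real.exp_pos _).le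
  have hGf : ∀ x : D, G x = (PF.expC V * f) x := by
    intro x
    have h1 : f2 x = f x := by
      rw [hf2]; simp only
      rw [← hf1e x.2, ext_apply, clip_eq (hB x)]
    have h2 : V2 x = V x := by
      rw [hV2]; simp only
      rw [← hVF x, clip_eq]
      simpa using V.norm_coe_le_norm x
    simp [hG, h1, h2]
  rw [PF.TW_apply, T0_eq h _ G hGf, T0_eq h _ G hGf]
  have hint : ∀ z : H, Integrable (fun y => G (z + y)) ν := fun z =>
    Integrable.of_bound (by fun_prop) (Real.exp M * B) (Eventually.of_forall fun y => hGB _)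
  set d := S u - S u' with hd
  set δ := projB e N d with hδ
  have hdist : dist u u' = ‖(u : H) - u'‖ := by rw [Subtype.dist_eq, dist_eq_norm]
  -- first part: the low modes
  have p1 : |∫ y, G (S u' + (y + δ)) ∂ν - ∫ y, G (S u' + y) ∂ν| ≤
      Cs * (CL * dist u u') * (Real.exp M * B) := by
    have h1 := hsh (fun y => G (S u' + y)) (Real.exp M * B) (by fun_prop) (fun x => hGB _) d
    refine h1.trans ?_
    have h2 := hCL u u.2 u' u'.2
    rw [← hdist] at h2
    have := Real.exp_pos M
    gcongr
  -- second part: the high modes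
  have p2 : |∫ y, G (S u + y) ∂ν - ∫ y, G (S u' + (y + δ)) ∂ν| ≤
      Real.exp M * (L * (γ * dist u u')) := by
    have hi2 : Integrable (fun y => G (S u' + (y + δ))) ν := by
      refine (hint (S u' + δ)).congr (Eventually.of_forall fun y => ?_)
      simp only; congr 1; abel
    rw [← integral_sub (hint _) hi2]
    have hp : ∀ y, ‖G (S u + y) - G (S u' + (y + δ))‖ ≤ Real.exp M * (L * (γ * dist u u')) := by
      intro y
      have hV : V2 (S u + y) = V2 (S u' + (y + δ)) := by
        simp only [hV2]
        congr 2
        apply projB_congr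
        intro j hj
        have e1 : S u + y = S u' + y + d := by rw [hd]; abel
        have e2 : S u' + (y + δ) = S u' + y + pN e N d := by rw [hδ, projB_eq]; abel
        rw [e1, e2, map_add, map_add e.repr (S u' + y)]
        change e.repr (S u' + y) j + e.repr d j = e.repr (S u' + y) j + e.repr (pN e N d) j
        rw [repr_pN e N d j (hj.trans_le hN)]
      rw [hG]
      simp only
      rw [hV, ← mul_sub, norm_mul]
      refine mul_le_mul (hexp _) ?_ (norm_nonneg _) (Real.exp_pos _).le
      refine (clip_lip _ _ _).trans ?_
      have h1 := hf1.dist_le_mul (S u + y) (S u' + (y + δ))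
      rw [Real.dist_eq] at h1
      refine h1.trans ?_
      change L * _ ≤ _
      refine mul_le_mul_of_nonneg_left ?_ hL
      rw [dist_eq_norm, show S u + y - (S u' + (y + δ)) = d - δ by rw [hd]; abel, hdist]
      exact hγ u u.2 u' u'.2
    have := norm_integral_le_of_norm_le_const (μ := ν) (Eventually.of_forall hp)
    rwa [probReal_univ, mul_one, Real.norm_eq_abs] at this
  have := abs_sub_le (∫ y, G (S u + y) ∂ν) (∫ y, G (S u' + (y + δ)) ∂ν) (∫ y, G (S u' + y) ∂ν)
  calc _ ≤ _ := this
    _ ≤ Real.exp M * (L * (γ * dist u u')) + Cs * (CL * dist u u') * (Real.exp M * B) :=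
      add_le_add p2 p1
    _ = _ := by ring

end ly

section main
variable {H : Type} [NormedAddCommGroup H] [InnerProductSpace ℝ H] [CompleteSpace H]
    [SecondCountableTopology H] [MeasurableSpace H] [BorelSpace H]
    {Ω : Type} [mΩ : MeasurableSpace Ω] {P : Measure Ω} [IsProbabilityMeasure P]
    {S : H → H} {e : HilbertBasis ℕ ℝ H} {η : ℕ → Ω → H}
    {b : ℕ → ℝ} {ξ : ℕ → ℕ → Ω → ℝ} {p : ℕ → ℝ → ℝ} {K : Set H}

theorem sys_of (hA : CondA S) (hK : K = msupp (P.map (η 1))) :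
    Sys S K (attainDom S K {0}) (P.map (η 1)) where
  hS := hA.1.continuous
  ae := by rw [hK]; exact supp_ae _
  inv := fun _ hu _ hy => dom_inv hA.1.continuous hu hy

theorem PF_of [IsProbabilityMeasure (P.map (η 1))] [CompactSpace (attainDom S K {0})]
    (hηm : ∀ k, Measurable (η k)) (hK : K = msupp (P.map (η 1))) (hKc : IsCompact K)
    (hA : CondA S) (hB : CondB S K) (hC : CondC S e) (hD : CondD P e η b ξ p)
    (hb : ∀ j, b j ≠ 0) (h : Sys S K (attainDom S K {0}) (P.map (η 1)))
    (V : C(attainDom S K {0}, ℝ)) (hV : ∃ N : ℕ, ∃ F : H → ℝ, Continuous F ∧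
      ∀ u : attainDom S K {0}, V u = F (projB e N u)) :
    ∃ a q C, PF (PF.TW (T0 h) V) a q C := by
  obtain ⟨NV, F, hF, hVF⟩ := hV
  obtain ⟨R, hR, hsub⟩ := dom_sub_ball hA.1.continuous hKc hB
  obtain ⟨CL, hCL0, -, -, -, -, -, hCL, -⟩ := hA.2 R (R / 2) (by linarith) (by linarith)
  obtain ⟨γ, hγ0, hγa, hγ, hγS⟩ := hC R hR
  obtain ⟨N, hN1, hN2⟩ := ((hγ.eventually (gt_mem_nhds
    (show 0 < Real.exp (-‖V‖) / Real.exp ‖V‖ by positivity))).and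
    (eventually_ge_atTop NV)).exists
  obtain ⟨Cs, hCs, hsh⟩ := shift_N hD hb (hηm 1) N
  refine ⟨Real.exp (-‖V‖), Real.exp ‖V‖ * γ N, Real.exp ‖V‖ * Cs * CL, ?_⟩
  have hmap : ∀ g : H → ℝ, Measurable g → ∫ y, g y ∂(P.map (η 1)) = ∫ ω, g (η 1 ω) ∂P :=
    fun g hg => integral_map (hηm 1).aemeasurable hg.aestronglyMeasurable
  constructor
  · exact PF.TW_pos (T0_pos h) V
  · positivity
  · exact PF.TW_one_ge (T0_pos h) (T0_one h) V
  · have := (hγ0 N).le; positivity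
  · rw [lt_div_iff₀ (Real.exp_pos _)] at hN1; linarith
  · positivity
  · intro f L B hL hf hB'
    refine ly h e hN2 hCs ?_ (fun u hu v hv => hCL u (hsub hu) v (hsub hv))
      (fun u hu v hv => hγS N u (hsub hu) v (hsub hv)) V F hF hVF f L B hL hf hB'
    intro g B' hg hB'' v
    rw [hmap g hg, hmap (fun y => g (y + projB e N v)) (hg.comp (measurable_add_const _))]
    exact hsh g B' hg hB'' v
  · intro f hf hp
    exact irr_main h hK (by rw [hK]; exact zero_mem_supp hD (hηm 1)) hA V f hf hp

theorem traj_meas (hD : CondD P e η b ξ p) (hS : Continuous S) (u : H) (k : ℕ) :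
    Measurable[sig ξ {jl | jl.2 ≤ k}] (traj S η (fun _ => u) k) := by
  induction k with
  | zero => exact measurable_const
  | succ k ih =>
    have h1 : Measurable[sig ξ {jl | jl.2 ≤ k + 1}] (traj S η (fun _ => u) k) :=
      ih.mono (sig_mono ξ fun jl (h : jl.2 ≤ k) => Nat.le_succ_of_le h) le_rfl
    have h2 := eta_meas_sig hD (k + 1) {jl | jl.2 ≤ k + 1} (fun j => le_refl (k + 1))
    have h3 : Measurable[sig ξ {jl | jl.2 ≤ k + 1}] (fun ω => S (traj S η (fun _ => u) k ω)) :=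
      hS.measurable.comp h1
    exact Measurable.add h3 h2

theorem traj_ae (hηm : ∀ k, Measurable (η k)) (hD : CondD P e η b ξ p) {D : Set H}
    (h : Sys S K D (P.map (η 1))) {u : H} (hu : u ∈ D) (k : ℕ) :
    ∀ᵐ ω ∂P, traj S η (fun _ => u) k ω ∈ D := by
  induction k with
  | zero => exact Eventually.of_forall fun _ => hu
  | succ k ih =>
    have h1 : ∀ᵐ ω ∂P, η (k + 1) ω ∈ K := by
      refine ae_of_ae_map (hηm (k + 1)).aemeasurable ?_
      rw [eta_law hD hηm]; exact h.ae
    filter_upwards [ih, h1] with ω h2 h3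
    exact h.inv _ h2 _ h3

theorem traj_formula [IsProbabilityMeasure (P.map (η 1))] {D : Set H} [CompactSpace D]
    (hηm : ∀ k, Measurable (η k)) (hD : CondD P e η b ξ p)
    (h : Sys S K D (P.map (η 1))) (W : H →ᵇ ℝ) (u : D) (k : ℕ) : ∀ (g : C(D, ℝ)),
    ∫ ω, ext g (traj S η (fun _ => (u : H)) k ω) *
      Real.exp (∑ n ∈ Finset.Icc 1 k, W (traj S η (fun _ => (u : H)) n ω)) ∂P =
      (PF.TW (T0 h) (res D W) ^ k) g u := by
  induction k with
  | zero => intro g; simp [traj]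
  | succ k ih =>
    intro g
    rw [pow_succ, Module.End.mul_apply, ← ih]
    set U := traj S η (fun _ => (u : H))
    set A : Ω → ℝ := fun ω => Real.exp (∑ n ∈ Finset.Icc 1 k, W (U n ω)) with hAdef
    have hle := sig_le hD {jl | jl.2 ≤ k}
    have hUs : Measurable[sig ξ {jl | jl.2 ≤ k}] (U k) := traj_meas hD h.hS u k
    have hAs : Measurable[sig ξ {jl | jl.2 ≤ k}] A := by
      refine Real.measurable_exp.comp (Finset.measurable_sum _ fun n hn => ?_)
      refine W.continuous.measurable.comp ((traj_meas hD h.hS (u : H) n).mono (sig_mono ξ ?_) le_rfl)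
      intro jl (hjl : jl.2 ≤ n)
      exact hjl.trans (Finset.mem_Icc.1 hn).2
    have hpair : Measurable[sig ξ {jl | jl.2 ≤ k}] (fun ω => (U k ω, A ω)) := hUs.prodMk hAs
    have hpm : Measurable (fun ω => (U k ω, A ω)) := hpair.mono hle le_rfl
    have hind : IndepFun (fun ω => (U k ω, A ω)) (η (k + 1)) P := by
      refine sig_indep hD (A := {jl | jl.2 ≤ k}) (B := {jl | jl.2 = k + 1}) ?_ hpair
        (eta_meas_sig hD (k + 1) _ fun j => rfl)
      rw [Set.disjoint_left]
      intro jl (h1 : jl.2 ≤ k) (h2 : jl.2 = k + 1)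
      omega
    set G : H → ℝ := fun x => ext g x * Real.exp (W x) with hG
    have hGc : Continuous G := by fun_prop
    have hSc := h.hS
    have hGB : ∀ x, |G x| ≤ ‖ext g‖ * Real.exp ‖W‖ := fun x => by
      rw [hG, abs_mul, abs_of_pos (Real.exp_pos _)]
      have h1 : W x ≤ ‖W‖ := (le_abs_self _).trans (W.norm_coe_le_norm _)
      have h2 : |ext g x| ≤ ‖ext g‖ := (ext g).norm_coe_le_norm _
      gcongr
    have hAB : ∀ ω, |A ω| ≤ Real.exp (∑ n ∈ Finset.Icc 1 k, ‖W‖) := fun ω => by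
      rw [abs_of_pos (Real.exp_pos _)]
      exact Real.exp_le_exp.2 (Finset.sum_le_sum fun n _ =>
        (le_abs_self _).trans (W.norm_coe_le_norm _))
    have e1 : ∀ ω, ext g (U (k + 1) ω) *
        Real.exp (∑ n ∈ Finset.Icc 1 (k + 1), W (U n ω)) =
        (fun (q : H × ℝ) y => q.2 * G (S q.1 + y)) (U k ω, A ω) (η (k + 1) ω) := by
      intro ω
      rw [Finset.sum_Icc_succ_top (by omega), Real.exp_add]
      change _ = A ω * (ext g (U (k + 1) ω) * Real.exp (W (U (k + 1) ω)))
      ring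
    refine (integral_congr_ae (Eventually.of_forall e1)).trans ?_
    have hFm : Measurable (Function.uncurry fun (q : H × ℝ) y => q.2 * G (S q.1 + y)) := by
      apply Continuous.measurable
      change Continuous fun z : (H × ℝ) × H => z.1.2 * G (S z.1.1 + z.2)
      fun_prop
    rw [indep_int hpm (hηm (k + 1)) hind (fun q y => q.2 * G (S q.1 + y)) hFm (by
      refine bdd_int (B := Real.exp (∑ n ∈ Finset.Icc 1 k, ‖W‖) * (‖ext g‖ * Real.exp ‖W‖))
        (hFm.comp (hpm.prodMk (hηm (k + 1)))) fun ω => ?_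
      simp only [abs_mul (A ω)]
      exact mul_le_mul (hAB ω) (hGB _) (abs_nonneg _) (Real.exp_pos _).le)]
    rw [eta_law hD hηm (k + 1), integral_map hpm.aemeasurable
      hFm.stronglyMeasurable.integral_prod_right.aestronglyMeasurable]
    apply integral_congr_ae
    filter_upwards [traj_ae hηm hD h u.2 k] with ω hω
    rw [integral_const_mul, mul_comm, ext_mem _ hω, PF.TW_apply,
      T0_eq h _ G (fun x => by simp [hG, mul_comm])]

end main
end PG



set_option linter.unusedSectionVars false

namespace PG

section fin
variable {H : Type} [NormedAddCommGroup H] [InnerProductSpace ℝ H] [CompleteSpace H]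
    [SecondCountableTopology H] [MeasurableSpace H] [BorelSpace H]
    {Ω : Type} [mΩ : MeasurableSpace Ω] {P : Measure Ω} [IsProbabilityMeasure P]
    {S : H → H} {e : HilbertBasis ℕ ℝ H} {η : ℕ → Ω → H}
    {b : ℕ → ℝ} {ξ : ℕ → ℕ → Ω → ℝ} {p : ℕ → ℝ → ℝ} {K : Set H}

theorem traj_one [IsProbabilityMeasure (P.map (η 1))] {D : Set H} [CompactSpace D]
    (hηm : ∀ k, Measurable (η k)) (hD : CondD P e η b ξ p)
    (h : Sys S K D (P.map (η 1))) (W : H →ᵇ ℝ) (u : D) (k : ℕ) :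
    ∫ ω, Real.exp (∑ n ∈ Finset.Icc 1 k, W (traj S η (fun _ => (u : H)) n ω)) ∂P =
      (PF.TW (T0 h) (res D W) ^ k) 1 u := by
  rw [← traj_formula hηm hD h W u k]
  apply integral_congr_ae
  filter_upwards [traj_ae hηm hD h u.2 k] with ω hω
  rw [ext_mem _ hω]; simp

theorem res_ext {D : Set H} [CompactSpace D] (W : C(D, ℝ)) : res D (ext W) = W := by
  ext x; simp

theorem map_wd {D : Set H} [CompactSpace D] (hDm : MeasurableSet D) (μ : Measure D) (g : C(D, ℝ)) :
    (μ.withDensity fun x => ENNReal.ofReal (g x)).map Subtype.val =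
      (μ.map Subtype.val).withDensity fun x => ENNReal.ofReal (ext g x) := by
  have hem : Measurable fun x => ENNReal.ofReal (ext g x) :=
    (ext g).continuous.measurable.ennreal_ofReal
  ext s hs
  rw [Measure.map_apply measurable_subtype_coe hs, withDensity_apply _ (measurable_subtype_coe hs),
    withDensity_apply _ hs, setLIntegral_map hs hem measurable_subtype_coe]
  simp

theorem kern_meas (hS : Continuous S) (hηm : Measurable (η 1)) :
    Measurable fun u => Measure.map (fun ω => S u + η 1 ω) P := by
  have hm : Measurable fun q : H × Ω => S q.1 + η 1 q.2 :=
    (hS.measurable.comp measurable_fst).add (hηm.comp measurable_snd)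
  refine Measure.measurable_of_measurable_coe _ fun s hs => ?_
  have : ∀ u, Measure.map (fun ω => S u + η 1 ω) P s =
      P (Prod.mk u ⁻¹' ((fun q : H × Ω => S q.1 + η 1 q.2) ⁻¹' s)) := fun u => by
    rw [Measure.map_apply (hηm.const_add _) hs]; rfl
  simp_rw [this]
  exact measurable_measure_prodMk_left (hm hs)

theorem dual_eq [IsProbabilityMeasure (P.map (η 1))] {D : Set H} [CompactSpace D]
    (hDm : MeasurableSet D)
    (hηm : Measurable (η 1)) (h : Sys S K D (P.map (η 1))) (V : H →ᵇ ℝ) (μ : Measure D)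
    [IsProbabilityMeasure μ] (lam : ℝ) (hl : 0 < lam)
    (hμ : ∀ f : C(D, ℝ), ∫ x, PF.TW (T0 h) (res D V) f x ∂μ = lam * ∫ x, f x ∂μ) :
    dualFK1 P S η (⇑V) (μ.map Subtype.val) = ENNReal.ofReal lam • (μ.map Subtype.val) := by
  have hVm : Measurable fun x => ENNReal.ofReal (Real.exp (V x)) :=
    (Real.continuous_exp.comp V.continuous).measurable.ennreal_ofReal
  have hcS := h.hS
  have key : ∀ f : H →ᵇ ℝ≥0, ∫⁻ x, f x ∂(dualFK1 P S η (⇑V) (μ.map Subtype.val)) =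
      ENNReal.ofReal lam * ∫⁻ x, f x ∂(μ.map Subtype.val) := by
    intro f
    have hfm : Measurable fun x => (f x : ℝ≥0∞) := f.continuous.measurable.coe_nnreal_ennreal
    let f' : C(D, ℝ) := ⟨fun x => (f x : ℝ), by fun_prop⟩
    have hf' : 0 ≤ f' := fun x => NNReal.coe_nonneg _
    have hVf : Measurable fun x => ENNReal.ofReal (Real.exp (V x)) * (f x : ℝ≥0∞) :=
      hVm.mul hfm
    have hk := kern_meas (P := P) hcS hηm
    have e1 : ∀ u : D, ∫⁻ x, (ENNReal.ofReal (Real.exp (V x)) * f x)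
        ∂(Measure.map (fun ω => S u + η 1 ω) P) =
        ENNReal.ofReal (PF.TW (T0 h) (res D V) f' u) := by
      intro u
      set G : H → ℝ := fun x => Real.exp (V x) * f x with hG
      have hGc : Continuous G := by fun_prop
      have hG0 : ∀ x, 0 ≤ G x := fun x => mul_nonneg (Real.exp_pos _).le (NNReal.coe_nonneg _)
      have hGi : Integrable (fun y => G (S u + y)) (P.map (η 1)) := by
        refine Integrable.of_bound (by fun_prop) (Real.exp ‖V‖ * (nndist f 0 : ℝ))
          (Eventually.of_forall fun y => ?_)
        rw [Real.norm_eq_abs, abs_of_nonneg (hG0 _)]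
        have h1 : V (S u + y) ≤ ‖V‖ := (le_abs_self _).trans (V.norm_coe_le_norm _)
        have h2 : (f (S u + y) : ℝ) ≤ (nndist f 0 : ℝ) := by
          exact_mod_cast BoundedContinuousFunction.NNReal.upper_bound f _
        have := NNReal.coe_nonneg (f (S u + y))
        simp only [hG]
        gcongr
      rw [PF.TW_apply, T0_eq h _ G (fun x => by simp [hG, f']),
        ofReal_integral_eq_lintegral_ofReal hGi (Eventually.of_forall fun y => hG0 _),
        lintegral_map hVf (hηm.const_add _),
        lintegral_map (by fun_prop) hηm]
      refine lintegral_congr fun ω => ?_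
      rw [hG, ENNReal.ofReal_mul (Real.exp_pos _).le, ENNReal.ofReal_coe_nnreal]
    rw [dualFK1, lintegral_withDensity_eq_lintegral_mul _ hVm hfm,
      Measure.lintegral_bind hk.aemeasurable (hVm.mul hfm).aemeasurable,
      lintegral_map ?_ measurable_subtype_coe, lintegral_map hfm measurable_subtype_coe]
    · simp only [Pi.mul_apply]
      simp_rw [e1]
      rw [← ofReal_integral_eq_lintegral_ofReal (PF.cint μ _)
        (Eventually.of_forall fun x => PF.TW_pos (T0_pos h) _ f' hf' x), hμ,
        ENNReal.ofReal_mul hl.le, ofReal_integral_eq_lintegral_ofReal (PF.cint μ _)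
        (Eventually.of_forall fun x => hf' x)]
      congr 1
      refine lintegral_congr fun x => ?_
      simp [f']
    · exact (Measure.measurable_lintegral (hVm.mul hfm)).comp hk
  have hpm : IsProbabilityMeasure (μ.map (Subtype.val : D → H)) :=
    Measure.isProbabilityMeasure_map measurable_subtype_coe.aemeasurable
  have hfin : IsFiniteMeasure (dualFK1 P S η (⇑V) (μ.map Subtype.val)) := by
    constructor
    have := key 1
    simp only [BoundedContinuousFunction.coe_one, Pi.one_apply, ENNReal.coe_one, lintegral_one] at this
    rw [this]
    exact ENNReal.mul_lt_top ENNReal.ofReal_lt_top (measure_lt_top _ _)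
  have hfin2 : IsFiniteMeasure (ENNReal.ofReal lam • (μ.map (Subtype.val : D → H))) :=
    Measure.smul_finite _ ENNReal.ofReal_ne_top
  refine ext_of_forall_lintegral_eq_of_IsFiniteMeasure fun f => ?_
  rw [key, lintegral_smul_measure, smul_eq_mul]

theorem equil_iff {Q : (H →ᵇ ℝ) → ℝ} (hQ0 : Q 0 = 0) (V : H →ᵇ ℝ) (σ : Measure H)
    [IsProbabilityMeasure σ] :
    ((⨆ W : (H →ᵇ ℝ), ENNReal.ofReal ((∫ x, W x ∂σ) - Q W)) ≠ ⊤ ∧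
        Q V = (∫ x, V x ∂σ) -
          (⨆ W : (H →ᵇ ℝ), ENNReal.ofReal ((∫ x, W x ∂σ) - Q W)).toReal) ↔
      ∀ W : (H →ᵇ ℝ), (∫ x, W x ∂σ) - Q W ≤ (∫ x, V x ∂σ) - Q V := by
  constructor
  · rintro ⟨h1, h2⟩ W
    have h3 := le_iSup (fun W : (H →ᵇ ℝ) => ENNReal.ofReal ((∫ x, W x ∂σ) - Q W)) W
    have h4 := (ENNReal.ofReal_le_iff_le_toReal h1).1 h3
    linarith
  · intro h
    have h0 : 0 ≤ (∫ x, V x ∂σ) - Q V := by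
      have := h 0
      simpa [hQ0] using this
    have hs : (⨆ W : (H →ᵇ ℝ), ENNReal.ofReal ((∫ x, W x ∂σ) - Q W)) =
        ENNReal.ofReal ((∫ x, V x ∂σ) - Q V) := by
      apply le_antisymm
      · exact iSup_le fun W => ENNReal.ofReal_le_ofReal (h W)
      · exact le_iSup (fun W : (H →ᵇ ℝ) => ENNReal.ofReal ((∫ x, W x ∂σ) - Q W)) V
    rw [hs, ENNReal.toReal_ofReal h0]
    exact ⟨ENNReal.ofReal_ne_top, by ring⟩

end fin
end PG

theorem statement2
    {H : Type} [NormedAddCommGroup H] [InnerProductSpace ℝ H] [CompleteSpace H]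
    [SecondCountableTopology H] [MeasurableSpace H] [BorelSpace H]
    {Ω : Type} [MeasurableSpace Ω] (P : Measure Ω) [IsProbabilityMeasure P]
    (S : H → H) (e : HilbertBasis ℕ ℝ H)
    (η : ℕ → Ω → H) (hηmeas : ∀ k, Measurable (η k))
    (b : ℕ → ℝ) (ξ : ℕ → ℕ → Ω → ℝ) (p : ℕ → ℝ → ℝ)
    (K : Set H) (hK : K = msupp (Measure.map (η 1) P)) (hKcomp : IsCompact K)
    (hA : CondA S) (hB : CondB S K) (hC : CondC S e) (hD : CondD P e η b ξ p)
    (hb : ∀ j, b j ≠ 0)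
    -- `Q(V) = lim_k k⁻¹ log 𝔼_u exp(∑_{n=1}^k V(u_n))`, independent of `u ∈ 𝒜`
    (Q : (H →ᵇ ℝ) → ℝ)
    (hQ : ∀ W : H →ᵇ ℝ, ∀ u ∈ attainDom S K ({0} : Set H),
      Tendsto (fun k : ℕ => (k : ℝ)⁻¹ *
          Real.log (∫ ω,
            Real.exp (∑ n ∈ Finset.Icc 1 k, W (traj S η (fun _ => u) n ω)) ∂P))
        atTop (𝓝 (Q W)))
    -- `V` belongs to the class `𝒱`
    (V : H →ᵇ ℝ)
    (hV : ∃ N : ℕ, ∃ F : H → ℝ, Continuous F ∧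
      ∀ u ∈ attainDom S K ({0} : Set H), V u = F (projB e N u)) :
    ∃ lam : ℝ, 0 < lam ∧ ∃ hV' : H →ᵇ ℝ, ∃ μV : ProbabilityMeasure H,
      (∀ x ∈ attainDom S K ({0} : Set H), 0 < hV' x) ∧
      (∀ u ∈ attainDom S K ({0} : Set H), FK P S η (⇑V) 1 (⇑hV') u = lam * hV' u) ∧
      dualFK1 P S η (⇑V) (μV : Measure H) = ENNReal.ofReal lam • (μV : Measure H) ∧
      (μV : Measure H) (attainDom S K ({0} : Set H)) = 1 ∧
      (∫ x, hV' x ∂(μV : Measure H)) = 1 ∧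
      (∃! σ : ProbabilityMeasure H,
        (σ : Measure H) (attainDom S K ({0} : Set H)) = 1 ∧
        (⨆ W : (H →ᵇ ℝ), ENNReal.ofReal ((∫ x, W x ∂(σ : Measure H)) - Q W)) ≠ ⊤ ∧
        Q V = (∫ x, V x ∂(σ : Measure H)) -
          (⨆ W : (H →ᵇ ℝ),
            ENNReal.ofReal ((∫ x, W x ∂(σ : Measure H)) - Q W)).toReal) ∧
      ∀ σ : ProbabilityMeasure H,
        ((σ : Measure H) (attainDom S K ({0} : Set H)) = 1 ∧
          (⨆ W : (H →ᵇ ℝ), ENNReal.ofReal ((∫ x, W x ∂(σ : Measure H)) - Q W)) ≠ ⊤ ∧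
          Q V = (∫ x, V x ∂(σ : Measure H)) -
            (⨆ W : (H →ᵇ ℝ),
              ENNReal.ofReal ((∫ x, W x ∂(σ : Measure H)) - Q W)).toReal) →
        (σ : Measure H)
          = (μV : Measure H).withDensity fun x => ENNReal.ofReal (hV' x) := by
  have hcomp := PG.dom_compact hKcomp hA hB hC
  set D := attainDom S K ({0} : Set H) with hDdef
  have hDm : MeasurableSet D := hcomp.isClosed.measurableSet
  haveI : CompactSpace D := isCompact_iff_compactSpace.1 hcomp
  have h0D : (0 : H) ∈ D := PG.zero_mem_dom S K
  haveI : Nonempty D := ⟨⟨0, h0D⟩⟩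
  haveI := Measure.isProbabilityMeasure_map (μ := P) (hηmeas 1).aemeasurable
  have h : PG.Sys S K D (P.map (η 1)) := PG.sys_of hA hK
  have hQX : ∀ (W : H →ᵇ ℝ) (u : D), Tendsto (fun k : ℕ => (k : ℝ)⁻¹ *
      Real.log ((PF.TW (PG.T0 h) (PG.res D W) ^ k) 1 u)) atTop (𝓝 (Q W)) := by
    intro W u
    refine (hQ W u u.2).congr fun k => ?_
    rw [PG.traj_one hηmeas hD h W u k]
  have hQr : ∀ W : H →ᵇ ℝ, Q (PG.ext (PG.res D W)) = Q W := by
    intro W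
    have h1 := hQX (PG.ext (PG.res D W)) ⟨0, h0D⟩
    rw [PG.res_ext] at h1
    exact tendsto_nhds_unique h1 (hQX W ⟨0, h0D⟩)
  have hQ0 : Q 0 = 0 := by
    refine tendsto_nhds_unique (hQ 0 0 h0D) ?_
    simp
  have hVX : ∃ N : ℕ, ∃ F : H → ℝ, Continuous F ∧
      ∀ u : D, PG.res D V u = F (projB e N u) := by
    obtain ⟨N, F, hF, hVF⟩ := hV
    exact ⟨N, F, hF, fun u => hVF u u.2⟩
  obtain ⟨a, q, C, hPF⟩ := PG.PF_of hηmeas hK hKcomp hA hB hC hD hb h (PG.res D V) hVX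
  obtain ⟨lam, hl, g, μ, hμp, hg, hTg, hμ, hμ1, heq, huniq⟩ := PF.abs_main (PG.T0_pos h)
    (PG.T0_one h) (fun W => Q (PG.ext W)) (fun W u => by
      have := hQX (PG.ext W) u
      rwa [PG.res_ext] at this) (PG.res D V) hPF
  have hμV : IsProbabilityMeasure (μ.map (Subtype.val : D → H)) :=
    Measure.isProbabilityMeasure_map measurable_subtype_coe.aemeasurable
  have hmapD : ∀ τ : Measure D, IsProbabilityMeasure τ → (τ.map (Subtype.val : D → H)) D = 1 := by
    intro τ hτ
    rw [Measure.map_apply measurable_subtype_coe hDm]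
    simp
  have hmapI : ∀ (τ : Measure D) (W : H →ᵇ ℝ),
      ∫ x, W x ∂(τ.map (Subtype.val : D → H)) = ∫ x, PG.res D W x ∂τ := by
    intro τ W
    rw [integral_map measurable_subtype_coe.aemeasurable W.continuous.aestronglyMeasurable]
    rfl
  -- every equilibrium state has the stated density
  have hfinal : ∀ σ : ProbabilityMeasure H,
        ((σ : Measure H) D = 1 ∧
          (⨆ W : (H →ᵇ ℝ), ENNReal.ofReal ((∫ x, W x ∂(σ : Measure H)) - Q W)) ≠ ⊤ ∧
          Q V = (∫ x, V x ∂(σ : Measure H)) -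
            (⨆ W : (H →ᵇ ℝ),
              ENNReal.ofReal ((∫ x, W x ∂(σ : Measure H)) - Q W)).toReal) →
        (σ : Measure H) = (μ.map (Subtype.val : D → H)).withDensity
          fun x => ENNReal.ofReal (PG.ext g x) := by
    rintro σ ⟨hσ1, hσ2⟩
    rw [PG.equil_iff hQ0 V (σ : Measure H)] at hσ2
    set τ : Measure D := Measure.comap Subtype.val (σ : Measure H) with hτ
    have hτmap : τ.map (Subtype.val : D → H) = (σ : Measure H) := by
      rw [hτ, map_comap_subtype_coe hDm, Measure.restrict_eq_self_of_ae_mem]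
      rw [← prob_compl_eq_zero_iff hDm] at hσ1
      exact hσ1
    have hτp : IsProbabilityMeasure τ := by
      constructor
      rw [hτ, comap_subtype_coe_apply hDm]
      simpa using hσ1
    have h1 := huniq τ hτp (fun W => by
      have := hσ2 (PG.ext W)
      rw [← hτmap, hmapI, hmapI, PG.res_ext] at this
      rw [hQr]
      exact this)
    rw [← hτmap, h1, PG.map_wd hDm]
  have hσp : IsProbabilityMeasure (μ.withDensity fun x => ENNReal.ofReal (g x)) := by
    constructor
    rw [withDensity_apply _ MeasurableSet.univ, Measure.restrict_univ,
      ← ofReal_integral_eq_lintegral_ofReal (PF.cint μ g) (Eventually.of_forall fun x => (hg x).le),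
      hμ1, ENNReal.ofReal_one]
  have hσm : IsProbabilityMeasure ((μ.withDensity fun x => ENNReal.ofReal (g x)).map
      (Subtype.val : D → H)) :=
    Measure.isProbabilityMeasure_map measurable_subtype_coe.aemeasurable
  refine ⟨lam, hl, PG.ext g, ⟨μ.map Subtype.val, hμV⟩, ?_, ?_, ?_, ?_, ?_, ?_, hfinal⟩
  · intro x hx
    rw [PG.ext_mem g hx]; exact hg _
  · intro u hu
    have h1 := PG.traj_formula hηmeas hD h V ⟨u, hu⟩ 1 g
    rw [pow_one, hTg] at h1
    rw [PG.ext_mem g hu]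
    exact h1
  · exact PG.dual_eq hDm (hηmeas 1) h V μ lam hl hμ
  · exact hmapD μ hμp
  · change ∫ x, PG.ext g x ∂(μ.map (Subtype.val : D → H)) = 1
    rw [hmapI, PG.res_ext]; exact hμ1
  · refine ⟨⟨(μ.withDensity fun x => ENNReal.ofReal (g x)).map Subtype.val, hσm⟩, ?_, ?_⟩
    · refine ⟨hmapD _ hσp, ?_⟩
      refine (PG.equil_iff hQ0 V ((μ.withDensity fun x => ENNReal.ofReal (g x)).map
        (Subtype.val : D → H))).2 fun W => ?_
      have h1 := heq (PG.res D W)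
      rw [hQr, hQr] at h1
      rw [hmapI, hmapI, PF.int_wd μ g hg, PF.int_wd μ g hg]
      exact h1
    · intro σ hσ
      refine Subtype.ext ((hfinal σ hσ).trans ?_)
      exact (PG.map_wd hDm μ g).symm
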